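/- Let q* ∈ D satisfy Δ(q*) = 0, ∇Δ(q*) ≠ 0, a(q*) ≠ 0, and (a·Δ_t − b·Δ_x)(q*) ≠ 0, and let p* ∈ ℝ be a non-isotropic simple root of the cubic M(q*, ·): M(q*, p*) = 0, ∂M/∂p(q*, p*) ≠ 0, and F(q*, p*) = a(q*)p*² + 2b(q*)p* + c(q*) ≠ 0. Then V(q*, p*) = 0, and the germ of V at the singular point (q*, p*) is C^∞-smoothly orbitally equivalent to the germ at 0 of the vector field ξ̇ = ξ, η̇ = −η, ζ̇ = ξη. -/

import Mathlib

open Filter Topology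

/-- Partial derivative of `g : ℝ² → ℝ` with respect to the first coordinate. -/
noncomputable def d1 (g : ℝ × ℝ → ℝ) (q : ℝ × ℝ) : ℝ := fderiv ℝ g q ((1 : ℝ), (0 : ℝ))

/-- Partial derivative of `g : ℝ² → ℝ` with respect to the second coordinate. -/
noncomputable def d2 (g : ℝ × ℝ → ℝ) (q : ℝ × ℝ) : ℝ := fderiv ℝ g q ((0 : ℝ), (1 : ℝ))

/-- Two vector fields `V`, `N` with marked points `x₀`, `y₀` are `C^∞`-smoothly orbitally
equivalent (as germs) if there are open neighborhoods `U ∋ x₀`, `U' ∋ y₀` with `U`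
contained in the domain `Dom`, a `C^∞` diffeomorphism `Φ : U → U'` with `Φ x₀ = y₀`, and
a `C^∞` nowhere-vanishing function `h : U → ℝ` with `DΦ(x)·V(x) = h(x)·N(Φ(x))` on `U`. -/
def OrbEquiv {E : Type*} [NormedAddCommGroup E] [NormedSpace ℝ E]
    (Dom : Set E) (V N : E → E) (x₀ y₀ : E) : Prop :=
  ∃ (U U' : Set E) (Φ Ψ : E → E) (h : E → ℝ),
    IsOpen U ∧ IsOpen U' ∧ x₀ ∈ U ∧ y₀ ∈ U' ∧ U ⊆ Dom ∧
    ContDiffOn ℝ (⊤ : ℕ∞) Φ U ∧ ContDiffOn ℝ (⊤ : ℕ∞) Ψ U' ∧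
    Φ x₀ = y₀ ∧ Set.MapsTo Φ U U' ∧ Set.MapsTo Ψ U' U ∧
    (∀ x ∈ U, Ψ (Φ x) = x) ∧ (∀ y ∈ U', Φ (Ψ y) = y) ∧
    ContDiffOn ℝ (⊤ : ℕ∞) h U ∧ (∀ x ∈ U, h x ≠ 0) ∧
    ∀ x ∈ U, fderiv ℝ Φ x (V x) = h x • N (Φ x)

open scoped ContDiff

set_option linter.unusedSectionVars false

section PointwiseComposition

variable {K E F : Type} [TopologicalSpace K] [CompactSpace K]
  [NormedAddCommGroup E] [NormedSpace ℝ E] [NormedAddCommGroup F] [NormedSpace ℝ F]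

/-- Pointwise application of a continuous family of continuous linear maps, as a bounded bilinear
map. -/
noncomputable def pointwiseApply :
    C(K, E →L[ℝ] F) →L[ℝ] C(K, E) →L[ℝ] C(K, F) :=
  LinearMap.mkContinuous₂
    (LinearMap.mk₂ ℝ (fun (A : C(K, E →L[ℝ] F)) (η : C(K, E)) =>
        (⟨fun s => A s (η s), A.continuous.clm_apply η.continuous⟩ : C(K, F)))
      (fun _ _ _ => by ext; simp) (fun _ _ _ => by ext; simp)
      (fun _ _ _ => by ext; simp) (fun _ _ _ => by ext; simp)) 1
    (fun A η => by
      rw [one_mul]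
      refine (ContinuousMap.norm_le _ (by positivity)).2 fun s => ?_
      exact ((A s).le_opNorm _).trans
        (mul_le_mul (A.norm_coe_le_norm s) (η.norm_coe_le_norm s) (norm_nonneg _) (by positivity)))

@[simp] lemma pointwiseApply_apply (A : C(K, E →L[ℝ] F)) (η : C(K, E)) (s : K) :
    pointwiseApply A η s = A s (η s) := rfl

/-- Composition of continuous maps with a fixed continuous function. -/
def postcompMap (g : E → F) (hg : Continuous g) (γ : C(K, E)) : C(K, F) :=
  ContinuousMap.comp ⟨g, hg⟩ γ

@[simp] lemma postcompMap_apply (g : E → F) (hg : Continuous g) (γ : C(K, E)) (s : K) :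
    postcompMap g hg γ s = g (γ s) := rfl

lemma continuous_postcompMap (g : E → F) (hg : Continuous g) :
    Continuous (postcompMap (K := K) g hg) :=
  ContinuousMap.continuous_postcomp _

lemma hasFDerivAt_postcompMap (g : E → F) (hg : ContDiff ℝ 1 g) (γ : C(K, E)) :
    HasFDerivAt (postcompMap (K := K) g hg.continuous)
      (pointwiseApply (postcompMap (fderiv ℝ g) (hg.continuous_fderiv one_ne_zero) γ)) γ := by
  rw [hasFDerivAt_iff_isLittleO_nhds_zero, Asymptotics.isLittleO_iff]
  intro ε hε
  have hc := (continuous_postcompMap (K := K) (fderiv ℝ g)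
    (hg.continuous_fderiv one_ne_zero)).continuousAt (x := γ)
  obtain ⟨δ, hδ, h⟩ := Metric.continuousAt_iff.1 hc ε hε
  filter_upwards [Metric.ball_mem_nhds (0 : C(K, E)) hδ] with η hη
  refine (ContinuousMap.norm_le _ (by positivity)).2 fun s => ?_
  have hη' : ‖η‖ < δ := by simpa using hη
  have key := (convex_segment (𝕜 := ℝ) (γ s) (γ s + η s)).norm_image_sub_le_of_norm_hasFDerivWithin_le'
    (f := g) (f' := fderiv ℝ g) (φ := fderiv ℝ g (γ s)) (C := ε)
    (fun x _ => ((hg.differentiable one_ne_zero) x).hasFDerivAt.hasFDerivWithinAt)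
    (by
      intro x hx
      obtain ⟨θ, hθ, rfl⟩ := (segment_eq_image' ℝ (γ s) (γ s + η s)) ▸ hx
      have h1 : dist (γ + θ • η) γ < δ := by
        rw [dist_eq_norm, add_sub_cancel_left, norm_smul]
        calc ‖θ‖ * ‖η‖ ≤ 1 * ‖η‖ := by
              gcongr; rw [Real.norm_eq_abs, abs_le]; constructor <;> linarith [hθ.1, hθ.2]
          _ < δ := by simpa using hη'
      have h2 := (ContinuousMap.dist_apply_le_dist s).trans (h h1).le
      rw [dist_eq_norm] at h2
      simpa using h2)
    (left_mem_segment ℝ _ _) (right_mem_segment ℝ _ _)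
  have h3 : ‖η s‖ ≤ ‖η‖ := η.norm_coe_le_norm s
  simp only [add_sub_cancel_left] at key
  simpa using key.trans (mul_le_mul_of_nonneg_left h3 hε.le)

lemma contDiff_nat_postcompMap (n : ℕ) : ∀ {F : Type} [NormedAddCommGroup F] [NormedSpace ℝ F]
    (g : E → F) (hg : ContDiff ℝ n g), ContDiff ℝ n (postcompMap (K := K) g hg.continuous) := by
  induction n with
  | zero =>
    intro F _ _ g hg
    exact contDiff_zero.2 (continuous_postcompMap _ _)
  | succ n ih =>
    intro F _ _ g hg
    have hg1 : ContDiff ℝ 1 g := hg.of_le (by exact_mod_cast Nat.succ_le_succ (Nat.zero_le n))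
    have hf : ContDiff ℝ n (fderiv ℝ g) := hg.fderiv_right (by norm_cast)
    push_cast
    rw [contDiff_succ_iff_hasFDerivAt]
    refine ⟨fun γ => pointwiseApply (postcompMap (fderiv ℝ g) hf.continuous γ), ?_, fun γ =>
      hasFDerivAt_postcompMap g hg1 γ⟩
    exact (pointwiseApply (K := K) (E := E) (F := F)).contDiff.comp (ih (fderiv ℝ g) hf)

/-- Composition with a smooth map is a smooth map between spaces of continuous functions. -/
theorem contDiff_postcompMap (g : E → F) (hg : ContDiff ℝ ∞ g) :
    ContDiff ℝ ∞ (postcompMap (K := K) g hg.continuous) :=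
  contDiff_infty.2 fun n => contDiff_nat_postcompMap n g (contDiff_infty.1 hg n)

end PointwiseComposition

section Averaging

open scoped unitInterval

variable {E F : Type} [NormedAddCommGroup E] [NormedSpace ℝ E]
  [NormedAddCommGroup F] [NormedSpace ℝ F]

/-- The extension of a path on the unit interval to the line by constants. -/
noncomputable def pathExtend (γ : C(I, F)) (s : ℝ) : F := γ (Set.projIcc 0 1 zero_le_one s)

lemma pathExtend_of_mem (γ : C(I, F)) {s : ℝ} (hs : s ∈ Set.Icc (0 : ℝ) 1) :
    pathExtend γ s = γ ⟨s, hs⟩ := by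
  rw [pathExtend, Set.projIcc_of_mem zero_le_one hs]

lemma continuous_pathExtend (γ : C(I, F)) : Continuous (pathExtend γ) :=
  γ.continuous.comp continuous_projIcc

lemma norm_pathExtend_le (γ : C(I, F)) (s : ℝ) : ‖pathExtend γ s‖ ≤ ‖γ‖ := γ.norm_coe_le_norm _

/-- The averaging operator `γ ↦ (t ↦ ∫₀¹ γ (t τ) dτ)`. -/
noncomputable def averageCLM : C(I, F) →L[ℝ] C(I, F) :=
  LinearMap.mkContinuous
    { toFun := fun γ => ⟨fun t => ∫ τ in (0 : ℝ)..1, pathExtend γ (t * τ), by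
        apply intervalIntegral.continuous_parametric_intervalIntegral_of_continuous'
        exact (continuous_pathExtend γ).comp
          ((continuous_subtype_val.comp continuous_fst).mul continuous_snd)⟩
      map_add' := fun γ η => by
        ext t
        have h := fun γ : C(I, F) => ((continuous_pathExtend γ).comp
          (continuous_const_mul (t : ℝ))).intervalIntegrable (μ := MeasureTheory.volume) 0 1
        exact intervalIntegral.integral_add (h γ) (h η)
      map_smul' := fun c γ => by
        ext t
        exact intervalIntegral.integral_smul c _ } 1
    (fun γ => by
      rw [one_mul]
      refine (ContinuousMap.norm_le _ (by positivity)).2 fun t => ?_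
      have := intervalIntegral.norm_integral_le_of_norm_le_const (a := 0) (b := 1)
        (f := fun τ => pathExtend γ (t * τ)) (C := ‖γ‖) (fun τ _ => norm_pathExtend_le _ _)
      simpa using this)

lemma averageCLM_apply (γ : C(I, F)) (t : I) :
    averageCLM γ t = ∫ τ in (0 : ℝ)..1, pathExtend γ (t * τ) := rfl

lemma norm_averageCLM_apply_le (γ : C(I, F)) (t : I) : ‖averageCLM γ t‖ ≤ ‖γ‖ := by
  have := intervalIntegral.norm_integral_le_of_norm_le_const (a := 0) (b := 1)
    (f := fun τ => pathExtend γ (t * τ)) (C := ‖γ‖) (fun τ _ => norm_pathExtend_le _ _)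
  simpa [averageCLM_apply] using this

lemma smul_averageCLM (γ : C(I, F)) (t : I) :
    (t : ℝ) • averageCLM γ t = ∫ s in (0 : ℝ)..t, pathExtend γ s := by
  rw [averageCLM_apply, intervalIntegral.smul_integral_comp_mul_left]
  simp

/-- The constant paths, as a linear map. -/
noncomputable def constPath : F →L[ℝ] C(I, F) :=
  LinearMap.mkContinuous
    { toFun := fun x => ContinuousMap.const I x
      map_add' := fun _ _ => rfl
      map_smul' := fun _ _ => rfl } 1
    (fun x => by
      rw [one_mul]
      exact (ContinuousMap.norm_le _ (norm_nonneg _)).2 fun _ => le_rfl)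

@[simp] lemma constPath_apply (x : F) (t : I) : constPath x t = x := rfl

/-- The path `s ↦ s`. -/
def idPath : C(I, ℝ) := ⟨fun s => s, continuous_subtype_val⟩

@[simp] lemma idPath_apply (s : I) : idPath s = (s : ℝ) := rfl

/-- The Volterra operator `γ ↦ (t ↦ ∫₀ᵗ γ)`. -/
noncomputable def volterraCLM : C(I, F) →L[ℝ] C(I, F) :=
  LinearMap.mkContinuous
    { toFun := fun γ => ⟨fun t => (t : ℝ) • averageCLM γ t,
        continuous_subtype_val.smul (averageCLM γ).continuous⟩
      map_add' := fun γ η => by ext t; simp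
      map_smul' := fun c γ => by ext t; simp [smul_comm c] } 1
    (fun γ => by
      rw [one_mul]
      refine (ContinuousMap.norm_le _ (by positivity)).2 fun t => ?_
      have h1 : ‖(t : ℝ)‖ ≤ 1 := by
        rw [Real.norm_eq_abs, abs_of_nonneg t.2.1]; exact t.2.2
      exact (norm_smul _ _).le.trans ((mul_le_mul h1 (norm_averageCLM_apply_le γ t)
        (norm_nonneg _) zero_le_one).trans (one_mul _).le))

lemma volterraCLM_apply (γ : C(I, F)) (t : I) :
    volterraCLM γ t = ∫ s in (0 : ℝ)..t, pathExtend γ s := smul_averageCLM γ t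

lemma volterraCLM_eq_smul (γ : C(I, F)) (t : I) :
    volterraCLM γ t = (t : ℝ) • averageCLM γ t := rfl

lemma norm_volterraCLM_le : ‖(volterraCLM : C(I, F) →L[ℝ] C(I, F))‖ ≤ 1 :=
  LinearMap.mkContinuous_norm_le _ zero_le_one _

/-- A smooth function on `ℝ × E`, seen as a family of paths parametrised by `E`, is smooth. -/
lemma contDiff_path_of_contDiff (g : ℝ × E → F) (hg : ContDiff ℝ ∞ g) :
    ContDiff ℝ ∞ fun z : E => (⟨fun s : I => g (s, z), by
      exact hg.continuous.comp (continuous_subtype_val.prodMk continuous_const)⟩ : C(I, F)) := by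
  have h : ContDiff ℝ ∞ fun z : E => postcompMap g hg.continuous
      ((⟨fun s : I => ((s : ℝ), (0 : E)), by fun_prop⟩ : C(I, ℝ × E)) +
        constPath (ContinuousLinearMap.inr ℝ ℝ E z)) :=
    (contDiff_postcompMap g hg).comp
      (contDiff_const.add
        ((constPath (F := ℝ × E)).comp (ContinuousLinearMap.inr ℝ ℝ E)).contDiff)
  convert h using 2 with z
  ext s
  simp

/-- Integrals over the unit interval of a smooth family are smooth. -/
lemma contDiff_integral_unitInterval (g : ℝ × E → F) (hg : ContDiff ℝ ∞ g) :
    ContDiff ℝ ∞ fun z : E => ∫ s in (0 : ℝ)..1, g (s, z) := by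
  have h := ((ContinuousMap.evalCLM ℝ (1 : I)).comp
    (averageCLM (F := F))).contDiff.comp (contDiff_path_of_contDiff g hg)
  convert h using 2 with z
  simp only [Function.comp_apply, ContinuousLinearMap.comp_apply, ContinuousMap.evalCLM_apply,
    averageCLM_apply]
  refine intervalIntegral.integral_congr fun s hs => ?_
  rw [Set.uIcc_of_le zero_le_one] at hs
  simp [pathExtend_of_mem _ hs]

end Averaging

section LocalInverse

open scoped unitInterval

variable {E F : Type} [NormedAddCommGroup E] [NormedSpace ℝ E] [CompleteSpace E]
  [NormedAddCommGroup F] [NormedSpace ℝ F]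

/-- A Lipschitz-small smooth perturbation of the identity has a smooth global inverse. -/
lemma exists_contDiff_inverse_sub (N : E → E) (hN : ContDiff ℝ ∞ N) {k : NNReal} (hk : k < 1)
    (hL : LipschitzWith k N) :
    ∃ S : E → E, ContDiff ℝ ∞ S ∧ (∀ y, S y - N (S y) = y) ∧ ∀ x, S (x - N x) = x := by
  have hinj : Function.Injective fun x => x - N x := by
    intro x y hxy
    have h1 : x - y = N x - N y := by
      have : x - N x = y - N y := hxy
      rw [sub_eq_sub_iff_sub_eq_sub] at this; exact this
    have h2 : ‖x - y‖ ≤ k * ‖x - y‖ := by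
      conv_lhs => rw [h1]
      exact hL.norm_sub_le x y
    have h3 : (k : ℝ) < 1 := by exact_mod_cast hk
    have h4 : ‖x - y‖ = 0 := by nlinarith [norm_nonneg (x - y)]
    exact sub_eq_zero.1 (norm_eq_zero.1 h4)
  have hsurj : ∀ y, ∃ x, x - N x = y := by
    intro y
    have hc : ContractingWith k fun x => y + N x := by
      refine ⟨hk, LipschitzWith.of_dist_le_mul fun a b => ?_⟩
      simpa using hL.dist_le_mul a b
    refine ⟨hc.fixedPoint, ?_⟩
    have := hc.fixedPoint_isFixedPt
    rw [Function.IsFixedPt] at this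
    rw [sub_eq_iff_eq_add]; exact this.symm
  choose S hS using hsurj
  have hS' : ∀ x, S (x - N x) = x := fun x => hinj (hS _)
  refine ⟨S, ?_, hS, hS'⟩
  rw [contDiff_iff_contDiffAt]
  intro y
  have hsm : ContDiff ℝ ∞ fun x => x - N x := contDiff_id.sub hN
  have hd : HasFDerivAt N (fderiv ℝ N (S y)) (S y) :=
    (hN.differentiable (by simp) _).hasFDerivAt
  have hnorm : ‖fderiv ℝ N (S y)‖ < 1 :=
    (hd.le_of_lipschitz hL).trans_lt (by exact_mod_cast hk)
  let e : E ≃L[ℝ] E := ContinuousLinearEquiv.ofUnit (Units.oneSub _ hnorm)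
  have hd' : HasFDerivAt (fun x => x - N x) (e : E →L[ℝ] E) (S y) := by
    have := (hasFDerivAt_id (S y)).sub hd
    exact this
  have hloc := (hsm.contDiffAt (x := S y)).to_localInverse hd' (by simp)
  simp only [hS] at hloc
  refine hloc.congr_of_eventuallyEq ?_
  have h1 := (hsm.contDiffAt (x := S y)).hasStrictFDerivAt' hd' (by simp)
  have h2 := h1.eventually_right_inverse
  simp only [hS] at h2
  filter_upwards [h2] with z hz
  apply hinj
  simp only [hS]
  exact hz.symm

end LocalInverse

section LocalDiffeo

open scoped unitInterval

variable {E F : Type} [NormedAddCommGroup E] [NormedSpace ℝ E] [CompleteSpace E]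
  [NormedAddCommGroup F] [NormedSpace ℝ F] [CompleteSpace F]

/-- The inverse function theorem, with smoothness of the inverse on the whole target. -/
lemma exists_smooth_openPartialHomeomorph (f : E → F) (a : E)
    (hf : ∀ᶠ z in 𝓝 a, ContDiffAt ℝ ∞ f z) (e : E ≃L[ℝ] F) (he : HasFDerivAt f (e : E →L[ℝ] F) a)
    {W : Set E} (hW : W ∈ 𝓝 a) :
    ∃ P : OpenPartialHomeomorph E F, ⇑P = f ∧ a ∈ P.source ∧ P.source ⊆ W ∧
      (∀ z ∈ P.source, ContDiffAt ℝ ∞ f z) ∧ ∀ y ∈ P.target, ContDiffAt ℝ ∞ P.symm y := by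
  have hfa : ContDiffAt ℝ ∞ f a := hf.self_of_nhds
  let P₀ := hfa.toOpenPartialHomeomorph f he (by simp)
  have hcont : ContinuousAt (fderiv ℝ f) a := (hfa.fderiv_right (m := 0) (by simp)).continuousAt
  have hopen : ∀ᶠ z in 𝓝 a, fderiv ℝ f z ∈ Set.range ((↑) : (E ≃L[ℝ] F) → (E →L[ℝ] F)) := by
    apply hcont
    rw [he.fderiv]
    exact ContinuousLinearEquiv.nhds e
  obtain ⟨O, hO, hOopen, haO⟩ := eventually_nhds_iff.1 (hf.and (hopen.and hW))
  have hPa : a ∈ P₀.source := hfa.mem_toOpenPartialHomeomorph_source he (by simp)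
  refine ⟨P₀.restrOpen O hOopen, rfl, ⟨hPa, haO⟩, fun z hz => (hO z hz.2).2.2,
    fun z hz => (hO z hz.2).1, ?_⟩
  intro y hy
  have hz := (P₀.restrOpen O hOopen).map_target hy
  set z := (P₀.restrOpen O hOopen).symm y with hzdef
  obtain ⟨e', he'⟩ := (hO z hz.2).2.1
  have hsm := (hO z hz.2).1
  refine (P₀.restrOpen O hOopen).contDiffAt_symm hy (f₀' := e') ?_ hsm
  have := (hsm.differentiableAt (by simp)).hasFDerivAt
  rw [he']
  exact this

end LocalDiffeo

section Flow

open scoped unitInterval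

variable {E : Type} [NormedAddCommGroup E] [NormedSpace ℝ E] [CompleteSpace E]

/-- The paths `γ z` are the integral curves on `[0, 1]` of the field `Z`, and depend smoothly on
the initial point. -/
structure IsFlowPath (Z : E → E) (γ : E → C(I, E)) : Prop where
  contDiff : ContDiff ℝ ∞ γ
  zero : ∀ z, pathExtend (γ z) 0 = z
  deriv : ∀ z, ∀ s ∈ Set.Ico (0 : ℝ) 1,
    HasDerivWithinAt (pathExtend (γ z)) (Z (pathExtend (γ z) s)) (Set.Ici s) s

lemma exists_isFlowPath (Z : E → E) (hZ : ContDiff ℝ ∞ Z) {k : NNReal} (hk : k < 1)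
    (hL : LipschitzWith k Z) : ∃ γ : E → C(I, E), IsFlowPath Z γ := by
  have hN : ContDiff ℝ ∞ fun γ : C(I, E) => volterraCLM (postcompMap Z hZ.continuous γ) :=
    (volterraCLM (F := E)).contDiff.comp (contDiff_postcompMap Z hZ)
  have hLip : LipschitzWith k fun γ : C(I, E) => volterraCLM (postcompMap Z hZ.continuous γ) := by
    refine LipschitzWith.of_dist_le_mul fun a b => ?_
    rw [dist_eq_norm, dist_eq_norm, ← map_sub]
    refine ((volterraCLM (F := E)).le_of_opNorm_le norm_volterraCLM_le _).trans ?_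
    rw [one_mul]
    refine (ContinuousMap.norm_le _ (by positivity)).2 fun s => ?_
    refine (hL.norm_sub_le (a s) (b s)).trans ?_
    gcongr
    exact (a - b).norm_coe_le_norm s
  obtain ⟨S, hS, hS1, -⟩ := exists_contDiff_inverse_sub _ hN hk hLip
  have hfix : ∀ z (t : I), S (constPath z) t =
      z + ∫ s in (0 : ℝ)..t, pathExtend (postcompMap Z hZ.continuous (S (constPath z))) s := by
    intro z t
    have h := congrArg (fun γ : C(I, E) => γ t) (hS1 (constPath z))
    simp only [ContinuousMap.sub_apply, volterraCLM_apply, constPath_apply] at h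
    exact sub_eq_iff_eq_add.1 h
  have hfix' : ∀ z, ∀ t ∈ Set.Icc (0 : ℝ) 1, pathExtend (S (constPath z)) t =
      z + ∫ s in (0 : ℝ)..t, Z (pathExtend (S (constPath z)) s) := by
    intro z t ht
    rw [pathExtend_of_mem _ ht, hfix]
    rfl
  refine ⟨fun z => S (constPath z), ⟨hS.comp (constPath (F := E)).contDiff, ?_, ?_⟩⟩
  · intro z
    rw [hfix' z 0 (by simp)]
    simp
  · intro z s hs
    have hcont : Continuous fun s => Z (pathExtend (S (constPath z)) s) :=
      hZ.continuous.comp (continuous_pathExtend _)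
    have h := (hcont.integral_hasStrictDerivAt 0 s).hasDerivAt.const_add z
    refine h.hasDerivWithinAt.congr_of_eventuallyEq ?_ (hfix' z s ⟨hs.1, hs.2.le⟩)
    filter_upwards [Ico_mem_nhdsGE hs.2] with t ht
    exact hfix' z t ⟨hs.1.trans ht.1, ht.2.le⟩

lemma IsFlowPath.eq_of_hasDeriv {Z : E → E} {γ : E → C(I, E)} (h : IsFlowPath Z γ) {k : NNReal}
    (hL : LipschitzWith k Z) {c : ℝ → E} {b : ℝ} (hb : b ≤ 1) {z : E}
    (hc0 : c 0 = z) (hc : ContinuousOn c (Set.Icc 0 b))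
    (hc' : ∀ t ∈ Set.Ico (0 : ℝ) b, HasDerivWithinAt c (Z (c t)) (Set.Ici t) t)
    {t : ℝ} (ht : t ∈ Set.Icc (0 : ℝ) b) : pathExtend (γ z) t = c t := by
  refine ODE_solution_unique (v := fun _ => Z) (K := k) (a := 0) (b := b) (fun _ => hL)
    (continuous_pathExtend _).continuousOn
    (fun t ht => h.deriv z t ⟨ht.1, ht.2.trans_le hb⟩) hc hc' ?_ ht
  rw [h.zero, hc0]

lemma IsFlowPath.add {Z : E → E} {γ : E → C(I, E)} (h : IsFlowPath Z γ) {k : NNReal}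
    (hL : LipschitzWith k Z) {s t : ℝ} (hs : 0 ≤ s) (ht : 0 ≤ t) (hst : s + t ≤ 1) (z : E) :
    pathExtend (γ (pathExtend (γ z) s)) t = pathExtend (γ z) (s + t) := by
  refine h.eq_of_hasDeriv hL (c := fun t => pathExtend (γ z) (s + t)) (b := 1 - s) (by linarith)
    (by simp) ((continuous_pathExtend _).comp (by fun_prop)).continuousOn ?_
    ⟨ht, by linarith⟩
  intro τ hτ
  have h1 := h.deriv z (s + τ) ⟨by linarith [hτ.1], by linarith [hτ.2]⟩
  have h2 : HasDerivWithinAt (fun t : ℝ => s + t) 1 (Set.Ici τ) τ :=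
    ((hasDerivAt_id τ).const_add s).hasDerivWithinAt
  have := h1.scomp τ h2 (fun x hx => by simpa using hx)
  rw [one_smul] at this
  exact this

/-- The time-`s` map of a flow is smooth. -/
lemma IsFlowPath.contDiff_time {Z : E → E} {γ : E → C(I, E)} (h : IsFlowPath Z γ) (s : ℝ) :
    ContDiff ℝ ∞ fun z => pathExtend (γ z) s :=
  (ContinuousMap.evalCLM ℝ (Set.projIcc (0 : ℝ) 1 zero_le_one s) :
    C(I, E) →L[ℝ] E).contDiff.comp h.contDiff

/-- The time-`1/2` map carries the field to itself. -/
lemma IsFlowPath.fderiv_time {Z : E → E} {γ : E → C(I, E)} (h : IsFlowPath Z γ) {k : NNReal}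
    (hL : LipschitzWith k Z) (z : E) :
    fderiv ℝ (fun z => pathExtend (γ z) (1 / 2)) z (Z z) = Z (pathExtend (γ z) (1 / 2)) := by
  have h0 := h.deriv z 0 (by simp)
  rw [h.zero] at h0
  have hd : HasFDerivAt (fun z => pathExtend (γ z) (1 / 2))
      (fderiv ℝ (fun z => pathExtend (γ z) (1 / 2)) z) (pathExtend (γ z) 0) := by
    rw [h.zero]
    exact ((h.contDiff_time _).differentiable (by simp) z).hasFDerivAt
  have h1 := hd.comp_hasDerivWithinAt 0 h0
  have h2 : HasDerivWithinAt (pathExtend (γ z)) (Z (pathExtend (γ z) (1 / 2)))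
      (Set.Ici (1 / 2)) (1 / 2) := h.deriv z (1 / 2) (by norm_num)
  have h3 : HasDerivWithinAt (fun s : ℝ => pathExtend (γ z) (1 / 2 + s))
      (Z (pathExtend (γ z) (1 / 2))) (Set.Ici 0) 0 := by
    have h4 : HasDerivWithinAt (fun t : ℝ => 1 / 2 + t) 1 (Set.Ici 0) 0 :=
      ((hasDerivAt_id (0 : ℝ)).const_add _).hasDerivWithinAt
    have := HasDerivWithinAt.scomp (t' := Set.Ici (1 / 2 : ℝ)) (g₁ := pathExtend (γ z))
      (h := fun t : ℝ => 1 / 2 + t)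
      (g₁' := Z (pathExtend (γ z) (1 / 2))) 0 (by simpa using h2) h4
      (fun x hx => by simpa using hx)
    rw [one_smul] at this
    exact this
  have h5 : HasDerivWithinAt (fun s : ℝ => pathExtend (γ z) (1 / 2 + s))
      (fderiv ℝ (fun z => pathExtend (γ z) (1 / 2)) z (Z z)) (Set.Ici 0) 0 := by
    refine h1.congr_of_eventuallyEq ?_ ?_
    · filter_upwards [Icc_mem_nhdsGE (show (0 : ℝ) < 1 / 2 by norm_num)] with s hs
      simp only [Function.comp_apply]
      rw [h.add hL hs.1 (by norm_num) (by linarith [hs.2]), add_comm]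
    · simp only [Function.comp_apply]
      rw [h.zero, add_zero]
  exact (uniqueDiffWithinAt_Ici (0 : ℝ)).eq_deriv _ h5 h3

/-- The integral of a function along the flow for time `1/2` has the expected derivative along
the field. -/
lemma IsFlowPath.fderiv_integral {Z : E → E} {γ : E → C(I, E)} (h : IsFlowPath Z γ) {k : NNReal}
    (hL : LipschitzWith k Z) {e : E → ℝ} (he : Continuous e) (z : E)
    (hd : DifferentiableAt ℝ (fun z => ∫ s in (0 : ℝ)..(1 / 2), e (pathExtend (γ z) s)) z) :
    fderiv ℝ (fun z => ∫ s in (0 : ℝ)..(1 / 2), e (pathExtend (γ z) s)) z (Z z) =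
      e (pathExtend (γ z) (1 / 2)) - e z := by
  have h0 := h.deriv z 0 (by simp)
  rw [h.zero] at h0
  have hd' : HasFDerivAt (fun z => ∫ s in (0 : ℝ)..(1 / 2), e (pathExtend (γ z) s))
      (fderiv ℝ (fun z => ∫ s in (0 : ℝ)..(1 / 2), e (pathExtend (γ z) s)) z)
      (pathExtend (γ z) 0) := by
    rw [h.zero]
    exact hd.hasFDerivAt
  have h1 := hd'.comp_hasDerivWithinAt 0 h0
  have hcont : Continuous fun s => e (pathExtend (γ z) s) := he.comp (continuous_pathExtend _)
  have key : ∀ s ∈ Set.Icc (0 : ℝ) (1 / 2),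
      (∫ τ in (0 : ℝ)..(1 / 2), e (pathExtend (γ (pathExtend (γ z) s)) τ)) =
        (∫ τ in (0 : ℝ)..(s + 1 / 2), e (pathExtend (γ z) τ)) -
          ∫ τ in (0 : ℝ)..s, e (pathExtend (γ z) τ) := by
    intro s hs
    rw [intervalIntegral.integral_interval_sub_left (hcont.intervalIntegrable _ _)
      (hcont.intervalIntegrable _ _)]
    have h2 := intervalIntegral.integral_comp_add_left (a := 0) (b := 1 / 2)
      (fun τ => e (pathExtend (γ z) τ)) s
    rw [add_zero] at h2
    rw [← h2]
    refine intervalIntegral.integral_congr fun τ hτ => ?_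
    rw [Set.uIcc_of_le (by norm_num)] at hτ
    rw [h.add hL hs.1 hτ.1 (by linarith [hs.2, hτ.2])]
  have h3 : HasDerivWithinAt (fun s : ℝ => (∫ τ in (0 : ℝ)..(s + 1 / 2), e (pathExtend (γ z) τ)) -
          ∫ τ in (0 : ℝ)..s, e (pathExtend (γ z) τ))
      (e (pathExtend (γ z) (1 / 2)) - e z) (Set.Ici 0) 0 := by
    have ha := (hcont.integral_hasStrictDerivAt 0 0).hasDerivAt
    have hb := (hcont.integral_hasStrictDerivAt 0 (0 + 1 / 2)).hasDerivAt
    have hb' := HasDerivAt.comp_add_const 0 (1 / 2) hb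
    rw [h.zero] at ha
    have := (hb'.sub ha).hasDerivWithinAt (s := Set.Ici 0)
    rw [zero_add] at this
    exact this
  refine (uniqueDiffWithinAt_Ici (0 : ℝ)).eq_deriv _ (h1.congr_of_eventuallyEq ?_ ?_) h3
  · filter_upwards [Icc_mem_nhdsGE (show (0 : ℝ) < 1 / 2 by norm_num)] with s hs
    exact (key s hs).symm
  · exact (key 0 (by norm_num)).symm

end Flow

section FlatEquation

variable {E F : Type} [NormedAddCommGroup E] [NormedSpace ℝ E]
  [NormedAddCommGroup F] [NormedSpace ℝ F]

lemma exists_bound_iteratedFDeriv {G : E → F} (hG : ContDiff ℝ ∞ G) (hc : HasCompactSupport G)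
    (i : ℕ) : ∃ C, ∀ z, ‖iteratedFDeriv ℝ i G z‖ ≤ C :=
  (hc.iteratedFDeriv i).exists_bound_of_continuous
    (hG.continuous_iteratedFDeriv (by exact_mod_cast le_top))

lemma norm_iteratedFDeriv_sub_const {f : E → F} (c : F) {i : ℕ} (hi : 1 ≤ i) (x : E) :
    ‖iteratedFDeriv ℝ i (fun z => f z - c) x‖ = ‖iteratedFDeriv ℝ i f x‖ := by
  obtain ⟨m, rfl⟩ := Nat.exists_eq_add_of_le' hi
  rw [← norm_iteratedFDeriv_fderiv, ← norm_iteratedFDeriv_fderiv]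
  congr 2
  ext1 z
  exact fderiv_sub_const c

/-- Multiplying by a high power of a linear form `ℓ` makes derivatives vanish on `ℓ = 0`. -/
lemma exists_norm_iteratedFDeriv_pow_smul_le (l : E →L[ℝ] ℝ) (i : ℕ) :
    ∀ {F : Type} [NormedAddCommGroup F] [NormedSpace ℝ F] (G : E → F), ContDiff ℝ ∞ G →
      HasCompactSupport G → ∀ N : ℕ, ∃ C, ∀ z,
        ‖iteratedFDeriv ℝ i (fun z => l z ^ (N + i) • G z) z‖ ≤ C * |l z| ^ N := by
  induction i with
  | zero =>
    intro F _ _ G hG hc N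
    obtain ⟨C, hC⟩ := hc.exists_bound_of_continuous hG.continuous
    refine ⟨C, fun z => ?_⟩
    rw [norm_iteratedFDeriv_zero, norm_smul, norm_pow, Real.norm_eq_abs, add_zero, mul_comm]
    gcongr
    exact hC z
  | succ i ih =>
    intro F _ _ G hG hc N
    have hl : ContDiff ℝ ∞ l := l.contDiff
    let B : F →L[ℝ] E →L[ℝ] F :=
      ((N + i + 1 : ℕ) : ℝ) • ContinuousLinearMap.smulRightL ℝ E F l
    let G' : E → E →L[ℝ] F := fun z => l z • fderiv ℝ G z + B (G z)
    have hG' : ContDiff ℝ ∞ G' :=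
      (hl.smul (hG.fderiv_right (m := ∞) (by simp))).add (B.contDiff.comp hG)
    have hc' : HasCompactSupport G' := by
      have h1 : HasCompactSupport fun z => l z • fderiv ℝ G z :=
        HasCompactSupport.smul_left (f := fun z => l z) (hc.fderiv (𝕜 := ℝ))
      have h2 : HasCompactSupport fun z => B (G z) := hc.comp_left (g := B) (map_zero B)
      exact h1.add h2
    obtain ⟨C, hC⟩ := ih G' hG' hc' N
    refine ⟨C, fun z => ?_⟩
    rw [← norm_iteratedFDeriv_fderiv]
    convert hC z using 3
    ext1 w
    have h1 : HasFDerivAt (fun z => l z ^ (N + (i + 1))) (((N + i + 1 : ℕ) : ℝ) •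
        l w ^ (N + i) • l) w := by
      have := (l.hasFDerivAt (x := w)).pow (N + i + 1)
      simpa [smul_smul, add_assoc] using this
    have h2 := (h1.smul (hG.differentiable (by simp) w).hasFDerivAt).fderiv
    refine h2.trans ?_
    ext v
    change l w ^ (N + (i + 1)) • fderiv ℝ G w v + (((N + i + 1 : ℕ) : ℝ) * (l w ^ (N + i) * l v)) • G w =
      l w ^ (N + i) • (l w • fderiv ℝ G w v + ((N + i + 1 : ℕ) : ℝ) • l v • G w)
    simp only [smul_add, smul_smul]
    congr 2
    ring

lemma norm_iteratedFDeriv_iterate_le {Φ : F → F} (hΦ : ContDiff ℝ ∞ Φ) {w : E → F}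
    (hw : ContDiff ℝ ∞ w) {k : ℕ} {C D : ℝ} (hC1 : 1 ≤ C)
    (hC : ∀ i, 1 ≤ i → i ≤ k → ∀ z, ‖iteratedFDeriv ℝ i Φ z‖ ≤ C)
    (hD : ∀ i, 1 ≤ i → i ≤ k → ∀ z, ‖iteratedFDeriv ℝ i w z‖ ≤ D ^ i) (hD0 : 0 ≤ D) (j : ℕ) :
    ∀ i, 1 ≤ i → i ≤ k → ∀ z,
      ‖iteratedFDeriv ℝ i (Φ^[j] ∘ w) z‖ ≤ ((k.factorial * C) ^ j * D) ^ i := by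
  have hit : ∀ j, ContDiff ℝ ∞ (Φ^[j] ∘ w) := by
    intro j
    induction j with
    | zero => simpa using hw
    | succ j ih =>
      rw [Function.iterate_succ', Function.comp_assoc]
      exact hΦ.comp ih
  induction j with
  | zero => simpa using hD
  | succ j ih =>
    intro i hi hik z
    have hone : (1 : ℝ) ≤ k.factorial * C := by
      have : (1 : ℝ) ≤ k.factorial := by exact_mod_cast Nat.one_le_iff_ne_zero.2 k.factorial_ne_zero
      nlinarith
    have h := norm_iteratedFDeriv_comp_le
      (g := fun y => Φ y - Φ ((Φ^[j] ∘ w) z)) (f := Φ^[j] ∘ w) (n := i) (N := ∞)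
      (hΦ.sub contDiff_const) (hit j) (by exact_mod_cast le_top) z (C := C)
      (D := (k.factorial * C) ^ j * D)
      (by
        intro m hm
        rcases Nat.eq_zero_or_pos m with rfl | hm0
        · rw [norm_iteratedFDeriv_zero]; simpa using by linarith
        · rw [norm_iteratedFDeriv_sub_const _ hm0]
          exact hC m hm0 (hm.trans hik) _)
      (fun m hm hmi => ih m hm (hmi.trans hik) z)
    have h2 : ‖iteratedFDeriv ℝ i (Φ^[j + 1] ∘ w) z‖ =
        ‖iteratedFDeriv ℝ i ((fun y => Φ y - Φ ((Φ^[j] ∘ w) z)) ∘ (Φ^[j] ∘ w)) z‖ := by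
      rw [Function.iterate_succ', Function.comp_assoc]
      exact (norm_iteratedFDeriv_sub_const (f := Φ ∘ (Φ^[j] ∘ w)) _ hi z).symm
    rw [h2]
    refine h.trans ?_
    have h3 : (i.factorial : ℝ) * C ≤ (k.factorial * C) ^ i := by
      calc (i.factorial : ℝ) * C ≤ k.factorial * C := by
            gcongr
        _ ≤ (k.factorial * C) ^ i := le_self_pow₀ hone (by omega)
    calc (i.factorial : ℝ) * C * ((k.factorial * C) ^ j * D) ^ i
        ≤ (k.factorial * C) ^ i * ((k.factorial * C) ^ j * D) ^ i := by gcongr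
      _ = ((k.factorial * C) ^ (j + 1) * D) ^ i := by rw [← mul_pow]; ring

/-- Solution of a cohomological equation with right-hand side flat along `ℓ = 0`, given a map `Φ`
preserving the field and contracting `ℓ`. -/
lemma exists_flat_solution [FiniteDimensional ℝ E] {Φ : E → E} (hΦ : ContDiff ℝ ∞ Φ)
    (hb : ∀ i, 1 ≤ i → ∃ C, ∀ z, ‖iteratedFDeriv ℝ i Φ z‖ ≤ C)
    (l : E →L[ℝ] ℝ) {q : ℝ} (hq0 : 0 ≤ q) (hq : q < 1) (hl : ∀ z, |l (Φ z)| ≤ q * |l z|)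
    {g e : E → ℝ} (hg : ∀ N : ℕ, ∃ G : E → ℝ, ContDiff ℝ ∞ G ∧ HasCompactSupport G ∧
      ∀ z, g z = l z ^ N * G z) {Z : E → E}
    (hZ : ∀ z, fderiv ℝ Φ z (Z z) = Z (Φ z)) (hgZ : ∀ z, fderiv ℝ g z (Z z) = e (Φ z) - e z)
    {K : ℝ} (he : ∀ z, |e z| ≤ K * |l z|) :
    ∃ f : E → ℝ, ContDiff ℝ ∞ f ∧ ∀ᶠ z in 𝓝 (0 : E), fderiv ℝ f z (Z z) = e z := by
  let χ : ContDiffBump (0 : E) := ⟨1, 2, one_pos, one_lt_two⟩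
  let w : E → E := fun z => χ z • z
  have hw : ContDiff ℝ ∞ w := χ.contDiff.smul contDiff_id
  have hwc : HasCompactSupport w := χ.hasCompactSupport.smul_right
  have hgs : ContDiff ℝ ∞ g := by
    obtain ⟨G, hG, -, h⟩ := hg 0
    have : g = G := by ext z; simp [h z]
    rwa [this]
  have hit : ∀ j, ContDiff ℝ ∞ (Φ^[j]) := fun j => by
    induction j with
    | zero => exact contDiff_id
    | succ j ih => rw [Function.iterate_succ']; exact hΦ.comp ih
  have hterm : ∀ j, ContDiff ℝ ∞ (g ∘ (Φ^[j] ∘ w)) := fun j => hgs.comp ((hit j).comp hw)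
  have hlj : ∀ j z, |l (Φ^[j] z)| ≤ q ^ j * |l z| := by
    intro j z
    induction j with
    | zero => simp
    | succ j ih =>
      rw [Function.iterate_succ_apply']
      calc _ ≤ q * |l (Φ^[j] z)| := hl _
        _ ≤ q * (q ^ j * |l z|) := by gcongr
        _ = _ := by ring
  obtain ⟨B, hB⟩ := hwc.exists_bound_of_continuous hw.continuous
  have hlw : ∀ z, |l (w z)| ≤ ‖l‖ * B := fun z =>
    (l.le_opNorm _).trans (by gcongr; exact hB z)
  have hBl : 0 ≤ ‖l‖ * B := (abs_nonneg _).trans (hlw 0)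
  have hbound : ∀ k : ℕ, ∃ A : ℝ, ∀ j z,
      ‖iteratedFDeriv ℝ k (g ∘ (Φ^[j] ∘ w)) z‖ ≤ A * (1 / 2) ^ j := by
    intro k
    choose! CΦ hCΦ using hb
    choose Cw hCw using fun i => exists_bound_iteratedFDeriv hw hwc i
    let C := 1 + ∑ i ∈ Finset.range (k + 1), |CΦ i|
    let D := 1 + ∑ i ∈ Finset.range (k + 1), |Cw i|
    have hC1 : 1 ≤ C := le_add_of_nonneg_right (Finset.sum_nonneg fun _ _ => abs_nonneg _)
    have hD1 : 1 ≤ D := le_add_of_nonneg_right (Finset.sum_nonneg fun _ _ => abs_nonneg _)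
    have hCi : ∀ i ≤ k, CΦ i ≤ C := fun i hi => (le_abs_self _).trans <|
      (Finset.single_le_sum (f := fun i => |CΦ i|) (fun _ _ => abs_nonneg _)
        (Finset.mem_range.2 (Nat.lt_succ_of_le hi))).trans (le_add_of_nonneg_left zero_le_one)
    have hDi : ∀ i ≤ k, Cw i ≤ D := fun i hi => (le_abs_self _).trans <|
      (Finset.single_le_sum (f := fun i => |Cw i|) (fun _ _ => abs_nonneg _)
        (Finset.mem_range.2 (Nat.lt_succ_of_le hi))).trans (le_add_of_nonneg_left zero_le_one)
    have hit' := norm_iteratedFDeriv_iterate_le hΦ hw (k := k) hC1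
      (fun i hi hik z => (hCΦ i hi z).trans (hCi i hik))
      (fun i hi hik z => ((hCw i z).trans (hDi i hik)).trans (le_self_pow₀ hD1 (by omega)))
      (zero_le_one.trans hD1)
    set L : ℝ := k.factorial * C with hL
    have hLpos : 0 < L := by positivity
    obtain ⟨M, hM⟩ : ∃ M : ℕ, q ^ M * L ^ k ≤ 1 / 2 := by
      have : Tendsto (fun M : ℕ => q ^ M * L ^ k) atTop (𝓝 (0 * L ^ k)) :=
        (tendsto_pow_atTop_nhds_zero_of_lt_one hq0 hq).mul_const _
      rw [zero_mul] at this
      exact (this.eventually_le_const (by norm_num)).exists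
    have hgd : ∀ i, ∃ C, ∀ z, i ≤ k → ‖iteratedFDeriv ℝ i g z‖ ≤ C * |l z| ^ M := by
      intro i
      obtain ⟨G, hG, hGc, h⟩ := hg (M + i)
      obtain ⟨C, hC⟩ := exists_norm_iteratedFDeriv_pow_smul_le l i G hG hGc M
      refine ⟨C, fun z _ => ?_⟩
      have : g = fun z => l z ^ (M + i) • G z := by ext z; simp [h z]
      rw [this]; exact hC z
    choose Cg hCg using hgd
    let A := ∑ i ∈ Finset.range (k + 1), |Cg i|
    have hA0 : 0 ≤ A := Finset.sum_nonneg fun _ _ => abs_nonneg _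
    have hAi : ∀ i ≤ k, Cg i ≤ A := fun i hi => (le_abs_self _).trans <|
      (Finset.single_le_sum (f := fun i => |Cg i|) (fun _ _ => abs_nonneg _)
        (Finset.mem_range.2 (Nat.lt_succ_of_le hi)))
    refine ⟨k.factorial * (A * (‖l‖ * B) ^ M) * D ^ k, fun j z => ?_⟩
    have h := norm_iteratedFDeriv_comp_le (g := g) (f := Φ^[j] ∘ w) (n := k) (N := ∞)
      hgs ((hit j).comp hw) (by exact_mod_cast le_top) z (C := A * (q ^ j * (‖l‖ * B)) ^ M)
      (D := L ^ j * D)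
      (by
        intro i hi
        refine (hCg i _ hi).trans ?_
        have h1 : |l ((Φ^[j] ∘ w) z)| ≤ q ^ j * (‖l‖ * B) :=
          (hlj j (w z)).trans (by gcongr; exact hlw z)
        calc Cg i * |l ((Φ^[j] ∘ w) z)| ^ M ≤ A * |l ((Φ^[j] ∘ w) z)| ^ M := by
              gcongr; exact hAi i hi
          _ ≤ _ := by gcongr)
      (fun i hi hik => hit' j i hi hik z)
    refine h.trans ?_
    calc k.factorial * (A * (q ^ j * (‖l‖ * B)) ^ M) * (L ^ j * D) ^ k
        = k.factorial * (A * (‖l‖ * B) ^ M) * D ^ k * (q ^ M * L ^ k) ^ j := by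
          simp only [mul_pow, ← pow_mul, mul_comm j]; ring
      _ ≤ _ := by gcongr
  choose A hA using hbound
  have hsum : ∀ k, Summable fun j : ℕ => A k * (1 / 2 : ℝ) ^ j := fun k =>
    (summable_geometric_of_lt_one (by norm_num) (by norm_num)).mul_left _
  have hF : ContDiff ℝ ∞ fun z => ∑' j, (g ∘ (Φ^[j] ∘ w)) z :=
    contDiff_tsum (N := ⊤) (v := fun k j => A k * (1 / 2) ^ j) hterm (fun k _ => hsum k)
      (fun k j z _ => hA k j z)
  refine ⟨fun z => -∑' j, (g ∘ (Φ^[j] ∘ w)) z, hF.neg, ?_⟩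
  have hwid : ∀ᶠ z in 𝓝 (0 : E), w =ᶠ[𝓝 z] id := by
    have h1 : ∀ᶠ z in 𝓝 (0 : E), w z = z := by
      filter_upwards [χ.eventuallyEq_one] with z hz
      simp only [w, hz]; simp
    exact h1.eventually_nhds
  filter_upwards [hwid] with z hz
  have hd := hasFDerivAt_tsum (u := fun j : ℕ => A 1 * (1 / 2 : ℝ) ^ j)
    (f := fun j => g ∘ (Φ^[j] ∘ w)) (f' := fun j z => fderiv ℝ (g ∘ (Φ^[j] ∘ w)) z) (x₀ := z)
    (hsum 1) (fun j x => ((hterm j).differentiable (by simp) x).hasFDerivAt)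
    (fun j x => by rw [← norm_iteratedFDeriv_one]; exact hA 1 j x)
    (Summable.of_norm_bounded (hsum 0) fun j => by
      rw [← norm_iteratedFDeriv_zero (𝕜 := ℝ)]; exact hA 0 j z) z
  have hsm : Summable fun j => fderiv ℝ (g ∘ (Φ^[j] ∘ w)) z :=
    Summable.of_norm_bounded (hsum 1) fun j => by rw [← norm_iteratedFDeriv_one]; exact hA 1 j z
  rw [fderiv_fun_neg, hd.fderiv, neg_apply]
  have hiter : ∀ j, fderiv ℝ (Φ^[j]) z (Z z) = Z (Φ^[j] z) := by
    intro j
    induction j with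
    | zero => simp
    | succ j ih =>
      rw [Function.iterate_succ', fderiv_comp _ (hΦ.differentiable (by simp) _)
        ((hit j).differentiable (by simp) _), ContinuousLinearMap.comp_apply, ih, hZ]
      rfl
  have hterm' : ∀ j, fderiv ℝ (g ∘ (Φ^[j] ∘ w)) z (Z z) = e (Φ^[j + 1] z) - e (Φ^[j] z) := by
    intro j
    have h1 : g ∘ (Φ^[j] ∘ w) =ᶠ[𝓝 z] g ∘ Φ^[j] := by
      filter_upwards [hz] with y hy
      simp [hy]
    rw [h1.fderiv_eq, fderiv_comp _ (hgs.differentiable (by simp) _)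
        ((hit j).differentiable (by simp) _), ContinuousLinearMap.comp_apply, hiter, hgZ,
        Function.iterate_succ_apply']
  have hhs : HasSum (fun j => e (Φ^[j + 1] z) - e (Φ^[j] z))
      ((∑' j, fderiv ℝ (g ∘ (Φ^[j] ∘ w)) z) (Z z)) := by
    have := (ContinuousLinearMap.apply ℝ ℝ (Z z)).hasSum hsm.hasSum
    simp only [← hterm']
    exact this
  have ht := hhs.tendsto_sum_nat
  simp only [Finset.sum_range_sub (fun j => e (Φ^[j] z))] at ht
  have hez : Tendsto (fun j => e (Φ^[j] z)) atTop (𝓝 0) := by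
    have h1 : Tendsto (fun j : ℕ => |K| * (q ^ j * |l z|)) atTop (𝓝 0) := by
      have := ((tendsto_pow_atTop_nhds_zero_of_lt_one hq0 hq).mul_const |l z|).const_mul |K|
      simpa using this
    refine squeeze_zero_norm (fun j => ?_) h1
    rw [Real.norm_eq_abs]
    calc |e (Φ^[j] z)| ≤ K * |l (Φ^[j] z)| := he _
      _ ≤ |K| * |l (Φ^[j] z)| := by gcongr; exact le_abs_self K
      _ ≤ |K| * (q ^ j * |l z|) := by gcongr; exact hlj j z
  have := tendsto_nhds_unique ht (hez.sub_const _)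
  rw [this]
  simp

end FlatEquation

section FlatSaddle

open scoped unitInterval

/-- The cohomological equation for a field that is a compactly supported perturbation of the
linear field `(v, 0, -p)`, with right-hand side flat along `p = 0`. -/
lemma exists_flat_solution_saddle {X ρ e : ℝ × ℝ × ℝ → ℝ}
    (hX : ContDiff ℝ ∞ X) (hXc : HasCompactSupport X)
    (hρ : ContDiff ℝ ∞ ρ) (hρc : HasCompactSupport ρ) (hρb : ∀ z, |ρ z| ≤ 1 / 2)
    (hec : HasCompactSupport e)
    (hflat : ∀ N : ℕ, ∃ H : ℝ × ℝ × ℝ → ℝ, ContDiff ℝ ∞ H ∧ ∀ z, e z = z.2.2 ^ N * H z) :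
    ∃ f : ℝ × ℝ × ℝ → ℝ, ContDiff ℝ ∞ f ∧
      ∀ᶠ z in 𝓝 (0 : ℝ × ℝ × ℝ), fderiv ℝ f z (z.1, X z, -(z.2.2 * (1 - ρ z))) = e z := by
  have he : ContDiff ℝ ∞ e := by
    obtain ⟨H, hH, h⟩ := hflat 0
    have : e = H := by ext z; simp [h z]
    rwa [this]
  let Y : ℝ × ℝ × ℝ → ℝ × ℝ × ℝ := fun z => (z.1, X z, -(z.2.2 * (1 - ρ z)))
  have hY : ContDiff ℝ ∞ Y := by
    refine contDiff_fst.prodMk (hX.prodMk ?_)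
    exact (contDiff_snd.snd.mul (contDiff_const.sub hρ)).neg
  obtain ⟨k₀, hk₀⟩ : ∃ k, LipschitzWith k Y := by
    let L : ℝ × ℝ × ℝ →L[ℝ] ℝ × ℝ × ℝ := (ContinuousLinearMap.fst ℝ ℝ (ℝ × ℝ)).prod
      ((0 : ℝ × ℝ × ℝ →L[ℝ] ℝ).prod
        (-(ContinuousLinearMap.snd ℝ ℝ ℝ).comp (ContinuousLinearMap.snd ℝ ℝ (ℝ × ℝ))))
    let W : ℝ × ℝ × ℝ → ℝ × ℝ × ℝ := fun z => (0, X z, z.2.2 * ρ z)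
    have hW : ContDiff ℝ ∞ W :=
      contDiff_const.prodMk (hX.prodMk (contDiff_snd.snd.mul hρ))
    have hWc : HasCompactSupport W := by
      refine HasCompactSupport.of_support_subset_isCompact (hXc.isCompact.union hρc.isCompact) ?_
      intro z hz
      by_contra hcon
      rw [Set.mem_union, not_or] at hcon
      exact hz (by simp [W, image_eq_zero_of_notMem_tsupport hcon.1,
        image_eq_zero_of_notMem_tsupport hcon.2])
    obtain ⟨C, hC⟩ := hW.lipschitzWith_of_hasCompactSupport hWc (by simp)
    refine ⟨‖L‖₊ + C, ?_⟩
    have : Y = fun z => L z + W z := by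
      ext z <;> simp [Y, L, W]; ring
    rw [this]
    exact L.lipschitz.add hC
  -- rescaling of time making the Lipschitz constant small
  let h : ℝ := 1 / (2 * (k₀ + 1))
  have hh0 : 0 < h := by positivity
  have hh1 : h ≤ 1 / 2 := by
    have : (0 : ℝ) ≤ k₀ := k₀.2
    simp only [h]
    rw [div_le_div_iff₀ (by positivity) (by norm_num)]
    linarith
  let Z : ℝ × ℝ × ℝ → ℝ × ℝ × ℝ := fun z => h • Y z
  have hZ : ContDiff ℝ ∞ Z := hY.const_smul h
  let k : NNReal := h.toNNReal * k₀
  have hkc : (k : ℝ) = h * k₀ := by simp [k, hh0.le]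
  have hkZ : LipschitzWith k Z := by
    refine LipschitzWith.of_dist_le_mul fun a b => ?_
    have := hk₀.dist_le_mul a b
    simp only [Z, dist_smul₀, Real.norm_eq_abs, abs_of_pos hh0]
    rw [hkc, mul_assoc]
    gcongr
  have hk1 : k < 1 := by
    have : h * k₀ < 1 := by
      have : (0 : ℝ) ≤ k₀ := k₀.2
      simp only [h]
      rw [div_mul_eq_mul_div, div_lt_one (by positivity)]
      linarith
    rw [← hkc] at this
    exact_mod_cast this
  obtain ⟨γ, hγ⟩ := exists_isFlowPath Z hZ hk1 hkZ
  -- a box containing all supports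
  obtain ⟨R, hR0, hR⟩ : ∃ R : ℝ, 0 < R ∧ ∀ z, R < ‖z‖ → X z = 0 ∧ ρ z = 0 ∧ e z = 0 := by
    obtain ⟨R, hR⟩ := ((hXc.isCompact.union hρc.isCompact).union hec.isCompact).isBounded.exists_norm_le
    refine ⟨max R 1, by positivity, fun z hz => ?_⟩
    have hz' : z ∉ (tsupport X ∪ tsupport ρ) ∪ tsupport e := fun hmem =>
      absurd (hR z hmem) (not_le.2 ((le_max_left _ _).trans_lt hz))
    simp only [Set.mem_union, not_or] at hz'
    exact ⟨image_eq_zero_of_notMem_tsupport hz'.1.1, image_eq_zero_of_notMem_tsupport hz'.1.2,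
      image_eq_zero_of_notMem_tsupport hz'.2⟩
  have hfar : ∀ z : ℝ × ℝ × ℝ, 2 * R < ‖z‖ → ∀ s ∈ Set.Icc (0 : ℝ) 1,
      R < ‖((Real.exp (h * s) * z.1, z.2.1, Real.exp (-(h * s)) * z.2.2) : ℝ × ℝ × ℝ)‖ := by
    intro z hz s hs
    have h1 : (1 : ℝ) ≤ Real.exp (h * s) := Real.one_le_exp (by have := hs.1; positivity)
    have h2 : (1 / 2 : ℝ) ≤ Real.exp (-(h * s)) := by
      have := Real.add_one_le_exp (-(h * s))
      have h3 : h * s ≤ 1 / 2 * 1 := mul_le_mul hh1 hs.2 hs.1 (by norm_num)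
      linarith
    simp only [Prod.norm_def, lt_sup_iff, Real.norm_eq_abs, abs_mul, Real.abs_exp] at hz ⊢
    rcases hz with hz | hz | hz
    · left; nlinarith [abs_nonneg z.1]
    · right; left; linarith
    · right; right; nlinarith [abs_nonneg z.2.2]
  have hfarflow : ∀ z : ℝ × ℝ × ℝ, 2 * R < ‖z‖ → ∀ s ∈ Set.Icc (0 : ℝ) 1, pathExtend (γ z) s =
      (Real.exp (h * s) * z.1, z.2.1, Real.exp (-(h * s)) * z.2.2) := by
    intro z hz s hs
    refine hγ.eq_of_hasDeriv hkZ
      (c := fun s => (Real.exp (h * s) * z.1, z.2.1, Real.exp (-(h * s)) * z.2.2)) le_rfl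
      (by simp) (by fun_prop) ?_ hs
    intro t ht
    obtain ⟨hX0, hρ0, -⟩ := hR _ (hfar z hz t ⟨ht.1, ht.2.le⟩)
    have hv : Z (Real.exp (h * t) * z.1, z.2.1, Real.exp (-(h * t)) * z.2.2) =
        (Real.exp (h * t) * (h * 1) * z.1, 0, Real.exp (-(h * t)) * -(h * 1) * z.2.2) := by
      simp only [Z, Y, hX0, hρ0, Prod.smul_mk, smul_eq_mul]
      ext <;> simp <;> ring
    rw [hv]
    have hlin : HasDerivAt (fun t : ℝ => h * t) (h * 1) t := (hasDerivAt_id t).const_mul h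
    exact ((hlin.exp.mul_const z.1).prodMk
      ((hasDerivAt_const t z.2.1).prodMk (hlin.neg.exp.mul_const z.2.2))).hasDerivWithinAt
  -- evolution of `p`
  let κ : ℝ × ℝ × ℝ → ℝ := fun z => 1 - ρ z
  have hκ : ContDiff ℝ ∞ κ := contDiff_const.sub hρ
  let κγ : ℝ × ℝ × ℝ → C(I, ℝ) := fun z => volterraCLM (postcompMap κ hκ.continuous (γ z))
  have hκγ : ContDiff ℝ ∞ κγ :=
    (volterraCLM (F := ℝ)).contDiff.comp ((contDiff_postcompMap κ hκ).comp hγ.contDiff)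
  have hκγ_apply : ∀ z, ∀ s ∈ Set.Icc (0 : ℝ) 1,
      pathExtend (κγ z) s = ∫ τ in (0 : ℝ)..s, κ (pathExtend (γ z) τ) := by
    intro z s hs
    rw [pathExtend_of_mem _ hs, volterraCLM_apply]
    rfl
  have hp : ∀ z : ℝ × ℝ × ℝ, ∀ s ∈ Set.Icc (0 : ℝ) 1,
      (pathExtend (γ z) s).2.2 = z.2.2 * Real.exp (-(h * pathExtend (κγ z) s)) := by
    intro z s hs
    rw [hκγ_apply z s hs]
    have hcont : Continuous fun τ => κ (pathExtend (γ z) τ) :=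
      hκ.continuous.comp (continuous_pathExtend _)
    have hint : ∀ t, HasDerivAt (fun s => ∫ τ in (0 : ℝ)..s, κ (pathExtend (γ z) τ))
        (κ (pathExtend (γ z) t)) t := fun t => (hcont.integral_hasStrictDerivAt 0 t).hasDerivAt
    have hconst := constant_of_has_deriv_right_zero (a := 0) (b := 1)
      (f := fun s => (pathExtend (γ z) s).2.2 *
        Real.exp (h * ∫ τ in (0 : ℝ)..s, κ (pathExtend (γ z) τ)))
      (by
        refine Continuous.continuousOn ?_
        have h1 : Continuous fun s => ∫ τ in (0 : ℝ)..s, κ (pathExtend (γ z) τ) :=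
          continuous_iff_continuousAt.2 fun t => (hint t).continuousAt
        have h2 := continuous_pathExtend (γ z)
        fun_prop)
      (by
        intro t ht
        have h1 := hγ.deriv z t ht
        have h2 : HasDerivWithinAt (fun s => (pathExtend (γ z) s).2.2)
            (Z (pathExtend (γ z) t)).2.2 (Set.Ici t) t :=
          (((ContinuousLinearMap.snd ℝ ℝ ℝ).comp
            (ContinuousLinearMap.snd ℝ ℝ (ℝ × ℝ))).hasFDerivAt).comp_hasDerivWithinAt t h1
        have h3 := h2.mul (((hint t).const_mul h).exp.hasDerivWithinAt (s := Set.Ici t))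
        refine h3.congr_deriv ?_
        change h * -((pathExtend (γ z) t).2.2 * κ (pathExtend (γ z) t)) * _ + _ = (0 : ℝ)
        ring) s hs
    simp only [hγ.zero, intervalIntegral.integral_same, mul_zero, Real.exp_zero, mul_one] at hconst
    rw [← hconst, Real.exp_neg, mul_assoc, mul_inv_cancel₀ (Real.exp_ne_zero _), mul_one]
  have hhalf : (1 / 2 : ℝ) ∈ Set.Icc (0 : ℝ) 1 := by norm_num
  -- the time-`1/2` map
  let Φ : ℝ × ℝ × ℝ → ℝ × ℝ × ℝ := fun z => pathExtend (γ z) (1 / 2)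
  have hΦ : ContDiff ℝ ∞ Φ := hγ.contDiff_time _
  have hΦb : ∀ i, 1 ≤ i → ∃ C, ∀ z, ‖iteratedFDeriv ℝ i Φ z‖ ≤ C := by
    intro i hi
    let A : ℝ × ℝ × ℝ →L[ℝ] ℝ × ℝ × ℝ :=
      (Real.exp (h * (1 / 2)) • ContinuousLinearMap.fst ℝ ℝ (ℝ × ℝ)).prod
        (((ContinuousLinearMap.fst ℝ ℝ ℝ).comp (ContinuousLinearMap.snd ℝ ℝ (ℝ × ℝ))).prod
        (Real.exp (-(h * (1 / 2))) •
          (ContinuousLinearMap.snd ℝ ℝ ℝ).comp (ContinuousLinearMap.snd ℝ ℝ (ℝ × ℝ))))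
    have hd : ContDiff ℝ ∞ (Φ - ⇑A) := hΦ.sub A.contDiff
    have hdc : HasCompactSupport (Φ - ⇑A) := by
      refine HasCompactSupport.of_support_subset_isCompact
        (isCompact_closedBall (0 : ℝ × ℝ × ℝ) (2 * R)) fun z hz => ?_
      by_contra hcon
      rw [mem_closedBall_zero_iff, not_le] at hcon
      refine hz ?_
      simp only [Pi.sub_apply, Φ, hfarflow z hcon _ hhalf]
      simp [A]
    obtain ⟨C, hC⟩ := exists_bound_iteratedFDeriv hd hdc i
    have hA : ∃ C', ∀ z, ‖iteratedFDeriv ℝ i A z‖ ≤ C' := by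
      obtain ⟨m, rfl⟩ := Nat.exists_eq_add_of_le' hi
      refine ⟨‖iteratedFDeriv ℝ m (fun _ : ℝ × ℝ × ℝ => A) 0‖, fun z => le_of_eq ?_⟩
      rw [← norm_iteratedFDeriv_fderiv]
      have hfa : fderiv ℝ A = fun _ => A := by ext1 z; exact A.fderiv
      rw [hfa]
      rcases Nat.eq_zero_or_pos m with rfl | hm
      · simp
      · simp [iteratedFDeriv_const_of_ne hm.ne']
    obtain ⟨C', hC'⟩ := hA
    refine ⟨C + C', fun z => ?_⟩
    have hsum : Φ = (Φ - ⇑A) + A := by simp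
    rw [hsum, iteratedFDeriv_add (hd.of_le (by exact_mod_cast le_top)) (A.contDiff)]
    exact (norm_add_le _ _).trans (add_le_add (hC z) (hC' z))
  let l : ℝ × ℝ × ℝ →L[ℝ] ℝ :=
    (ContinuousLinearMap.snd ℝ ℝ ℝ).comp (ContinuousLinearMap.snd ℝ ℝ (ℝ × ℝ))
  have hlΦ : ∀ z, |l (Φ z)| ≤ Real.exp (-(h / 4)) * |l z| := by
    intro z
    change |(pathExtend (γ z) (1 / 2)).2.2| ≤ Real.exp (-(h / 4)) * |z.2.2|
    rw [hp z _ hhalf, abs_mul, Real.abs_exp, mul_comm]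
    gcongr
    rw [hκγ_apply z _ hhalf]
    have hcont : Continuous fun τ => κ (pathExtend (γ z) τ) :=
      hκ.continuous.comp (continuous_pathExtend _)
    have : (∫ τ in (0 : ℝ)..(1 / 2), (1 / 2 : ℝ)) ≤ ∫ τ in (0 : ℝ)..(1 / 2), κ (pathExtend (γ z) τ) := by
      refine intervalIntegral.integral_mono_on (by norm_num) (by simp)
        (hcont.intervalIntegrable _ _) fun τ _ => ?_
      have := abs_le.1 (hρb (pathExtend (γ z) τ))
      simp only [κ]; linarith
    rw [intervalIntegral.integral_const] at this
    norm_num at this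
    nlinarith
  -- a cutoff equal to one on the box
  let χ : ContDiffBump (0 : ℝ × ℝ × ℝ) := ⟨2 * R, 3 * R, by positivity, by linarith⟩
  have hχ1 : ∀ z, ‖z‖ ≤ 2 * R → χ z = 1 := fun z hz =>
    χ.one_of_mem_closedBall (by simpa using hz)
  let g : ℝ × ℝ × ℝ → ℝ := fun z => ∫ s in (0 : ℝ)..(1 / 2), e (pathExtend (γ z) s)
  have hg : ∀ N : ℕ, ∃ G : ℝ × ℝ × ℝ → ℝ, ContDiff ℝ ∞ G ∧ HasCompactSupport G ∧
      ∀ z, g z = l z ^ N * G z := by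
    intro N
    obtain ⟨H, hH, hHe⟩ := hflat N
    have hexp : ContDiff ℝ ∞ fun y : ℝ => Real.exp (-(h * y)) ^ N :=
      ((contDiff_const.mul contDiff_id).neg.exp).pow N
    let m : ℝ × ℝ × ℝ → C(I, ℝ) := fun z =>
      postcompMap _ hexp.continuous (κγ z) * postcompMap H hH.continuous (γ z)
    have hm : ContDiff ℝ ∞ m := ((contDiff_postcompMap _ hexp).comp hκγ).mul
      ((contDiff_postcompMap H hH).comp hγ.contDiff)
    let G₀ : ℝ × ℝ × ℝ → ℝ := fun z => volterraCLM (m z) ⟨1 / 2, hhalf⟩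
    have hG₀ : ContDiff ℝ ∞ G₀ :=
      ((ContinuousMap.evalCLM ℝ (⟨1 / 2, hhalf⟩ : I) : C(I, ℝ) →L[ℝ] ℝ).comp
        (volterraCLM (F := ℝ))).contDiff.comp hm
    have hgG : ∀ z : ℝ × ℝ × ℝ, g z = z.2.2 ^ N * G₀ z := by
      intro z
      simp only [G₀, volterraCLM_apply, g]
      rw [← intervalIntegral.integral_const_mul]
      refine intervalIntegral.integral_congr fun s hs => ?_
      rw [Set.uIcc_of_le (by norm_num)] at hs
      have hs' : s ∈ Set.Icc (0 : ℝ) 1 := ⟨hs.1, hs.2.trans (by norm_num)⟩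
      have h1 := hHe (pathExtend (γ z) s)
      rw [hp z s hs', mul_pow] at h1
      change e (pathExtend (γ z) s) = z.2.2 ^ N * pathExtend (m z) s
      rw [h1, pathExtend_of_mem _ hs', pathExtend_of_mem _ hs', pathExtend_of_mem _ hs']
      simp only [m, ContinuousMap.mul_apply, postcompMap_apply]
      ring
    refine ⟨fun z => χ z * G₀ z, χ.contDiff.mul hG₀, χ.hasCompactSupport.mul_right, fun z => ?_⟩
    change g z = z.2.2 ^ N * (χ z * G₀ z)
    by_cases hz : ‖z‖ ≤ 2 * R
    · rw [hχ1 z hz, one_mul]; exact hgG z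
    · rw [not_le] at hz
      have hg0 : g z = 0 := by
        have : g z = ∫ s in (0 : ℝ)..(1 / 2), (0 : ℝ) := by
          refine intervalIntegral.integral_congr fun s hs => ?_
          rw [Set.uIcc_of_le (by norm_num)] at hs
          have hs' : s ∈ Set.Icc (0 : ℝ) 1 := ⟨hs.1, hs.2.trans (by norm_num)⟩
          rw [hfarflow z hz s hs']
          exact (hR _ (hfar z hz s hs')).2.2
        rw [this]; simp
      have h2 := hgG z
      rw [hg0] at h2 ⊢
      linear_combination (χ z) * h2
  obtain ⟨H, hH, hHe⟩ := hflat 1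
  have hHc : HasCompactSupport fun z => χ z * H z := χ.hasCompactSupport.mul_right
  obtain ⟨K, hK⟩ := hHc.exists_bound_of_continuous (χ.continuous.mul hH.continuous)
  have heK : ∀ z, |e z| ≤ K * |l z| := by
    intro z
    have h1 : e z = z.2.2 * (χ z * H z) := by
      by_cases hz : ‖z‖ ≤ 2 * R
      · rw [hχ1 z hz, one_mul, hHe z, pow_one]
      · rw [not_le] at hz
        have h0 := (hR z (by linarith)).2.2
        have h2 := hHe z
        rw [h0] at h2 ⊢
        linear_combination (χ z) * h2
    rw [h1, abs_mul, mul_comm]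
    exact mul_le_mul_of_nonneg_right (hK z) (abs_nonneg _)
  have hgs : ContDiff ℝ ∞ g := by
    obtain ⟨G, hG, -, h⟩ := hg 0
    have : g = G := by ext z; simp [h z]
    rwa [this]
  obtain ⟨f, hf, hfe⟩ := exists_flat_solution hΦ hΦb l (Real.exp_pos (-(h / 4))).le
    (Real.exp_lt_one_iff.2 (by linarith)) hlΦ hg (Z := Z) (e := e)
    (fun z => hγ.fderiv_time hkZ z)
    (fun z => hγ.fderiv_integral hkZ he.continuous z (hgs.differentiable (by simp) z)) heK
  refine ⟨fun z => h • f z, hf.const_smul h, ?_⟩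
  filter_upwards [hfe] with z hz
  rw [fderiv_fun_const_smul (hf.differentiable (by simp) z)]
  rw [← hz]
  simp only [Z, map_smul]
  rfl

end FlatSaddle

section Borel

variable {E : Type} [NormedAddCommGroup E] [NormedSpace ℝ E]

lemma exists_scale_bound (χ : ContDiffBump (0 : ℝ)) {f : E → ℝ} (hf : ContDiff ℝ ∞ f)
    (hc : HasCompactSupport f) (k : ℕ) {δ : ℝ} (hδ : 0 < δ) :
    ∃ ε : ℝ, 0 < ε ∧ ∀ i ≤ k, ∀ j < i, ∀ y : ℝ × E,
      ‖iteratedFDeriv ℝ j (fun y : ℝ × E => y.1 ^ i * χ (ε⁻¹ * y.1) * f y.2) y‖ ≤ δ := by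
  let B : ℕ → ℝ × E → ℝ := fun i y => y.1 ^ i * χ y.1 * f y.2
  have hB : ∀ i, ContDiff ℝ ∞ (B i) := fun i =>
    ((contDiff_fst.pow i).mul (χ.contDiff.comp contDiff_fst)).mul (hf.comp contDiff_snd)
  have hBc : ∀ i, HasCompactSupport (B i) := by
    intro i
    refine HasCompactSupport.of_support_subset_isCompact
      (χ.hasCompactSupport.isCompact.prod hc.isCompact) fun y hy => ?_
    simp only [B, Function.mem_support, mul_ne_zero_iff] at hy
    exact ⟨subset_tsupport _ hy.1.2, subset_tsupport _ hy.2⟩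
  choose C hC using fun i j => exists_bound_iteratedFDeriv (hB i) (hBc i) j
  let A : ℝ := ∑ i ∈ Finset.range (k + 1), ∑ j ∈ Finset.range (k + 1), |C i j|
  have hA : ∀ i ≤ k, ∀ j ≤ k, C i j ≤ A := by
    intro i hi j hj
    refine (le_abs_self _).trans ((Finset.single_le_sum (f := fun j => |C i j|)
      (fun _ _ => abs_nonneg _) (Finset.mem_range.2 (Nat.lt_succ_of_le hj))).trans
      (Finset.single_le_sum (f := fun i => ∑ j ∈ Finset.range (k + 1), |C i j|)
      (fun _ _ => Finset.sum_nonneg fun _ _ => abs_nonneg _)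
      (Finset.mem_range.2 (Nat.lt_succ_of_le hi))))
  have hA0 : 0 ≤ A := Finset.sum_nonneg fun _ _ => Finset.sum_nonneg fun _ _ => abs_nonneg _
  let ε : ℝ := min 1 (δ / (A + 1))
  have hε0 : 0 < ε := lt_min one_pos (by positivity)
  have hε1 : ε ≤ 1 := min_le_left _ _
  have hε2 : A * ε ≤ δ := by
    calc A * ε ≤ A * (δ / (A + 1)) := by gcongr; exact min_le_right _ _
      _ ≤ δ := by rw [mul_div_assoc', div_le_iff₀ (by positivity)]; nlinarith
  refine ⟨ε, hε0, fun i hi j hj y => ?_⟩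
  let L : ℝ × E →L[ℝ] ℝ × E :=
    (ε⁻¹ • ContinuousLinearMap.fst ℝ ℝ E).prod (ContinuousLinearMap.snd ℝ ℝ E)
  have hL : ‖L‖ ≤ ε⁻¹ := by
    refine L.opNorm_le_bound (by positivity) fun y => ?_
    have h1 : 1 ≤ ε⁻¹ := (one_le_inv₀ hε0).2 hε1
    refine max_le ?_ ?_
    · change ‖ε⁻¹ • y.1‖ ≤ _
      rw [norm_smul, Real.norm_eq_abs, abs_of_pos (by positivity)]
      gcongr
      exact norm_fst_le y
    · change ‖y.2‖ ≤ _
      exact (norm_snd_le y).trans (le_mul_of_one_le_left (norm_nonneg _) h1)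
  have heq : (fun y : ℝ × E => y.1 ^ i * χ (ε⁻¹ * y.1) * f y.2) = ε ^ i • (B i ∘ L) := by
    ext y
    change _ = ε ^ i * ((ε⁻¹ * y.1) ^ i * χ (ε⁻¹ * y.1) * f y.2)
    rw [mul_pow, ← mul_assoc, ← mul_assoc, ← mul_assoc, ← mul_pow, mul_inv_cancel₀ hε0.ne']
    simp
  have hj' : ((j : ℕ) : WithTop ℕ∞) ≤ ∞ := by exact_mod_cast le_top
  rw [heq, iteratedFDeriv_const_smul_apply
    (((hB i).comp L.contDiff).contDiffAt.of_le hj'), norm_smul,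
    L.iteratedFDeriv_comp_right (hB i) y hj', norm_pow, Real.norm_eq_abs, abs_of_pos hε0]
  have h2 := ((iteratedFDeriv ℝ j (B i) (L y)).norm_compContinuousLinearMap_le fun _ => L)
  rw [Finset.prod_const, Finset.card_univ, Fintype.card_fin] at h2
  calc ε ^ i * ‖(iteratedFDeriv ℝ j (B i) (L y)).compContinuousLinearMap fun _ => L‖
      ≤ ε ^ i * (A * ε⁻¹ ^ j) := by
        gcongr
        refine h2.trans ?_
        gcongr
        exact (hC i j _).trans (hA i hi j (by omega))
    _ = A * ε ^ (i - j) := by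
        have : ε ^ i = ε ^ (i - j) * ε ^ j := by rw [← pow_add]; congr 1; omega
        rw [this, inv_pow]
        field_simp
    _ ≤ A * ε := by
        gcongr
        exact pow_le_of_le_one hε0.le hε1 (by omega)
    _ ≤ δ := hε2

/-- Borel's lemma with parameters: a smooth function with prescribed expansion along `s = 0`. -/
lemma exists_contDiff_expansion (f : ℕ → E → ℝ) (hf : ∀ k, ContDiff ℝ ∞ (f k))
    (hc : ∀ k, HasCompactSupport (f k)) :
    ∃ F : ℝ × E → ℝ, ContDiff ℝ ∞ F ∧ ∀ N : ℕ, ∃ G : ℝ × E → ℝ, ContDiff ℝ ∞ G ∧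
      ∀ y, F y = ∑ k ∈ Finset.range N, y.1 ^ k * f k y.2 + y.1 ^ N * G y := by
  let χ : ContDiffBump (0 : ℝ) := ⟨1, 2, one_pos, one_lt_two⟩
  choose ε hε hb using fun k => exists_scale_bound χ (hf k) (hc k) k
    (δ := (1 / 2) ^ k) (by positivity)
  let t : ℕ → ℕ → ℝ × E → ℝ := fun N i y => y.1 ^ i * χ ((ε (N + i))⁻¹ * y.1) * f (N + i) y.2
  have ht : ∀ N i, ContDiff ℝ ∞ (t N i) := fun N i =>
    ((contDiff_fst.pow i).mul (χ.contDiff.comp (contDiff_const.mul contDiff_fst))).mul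
      ((hf _).comp contDiff_snd)
  have htb : ∀ N i, ∀ j < i, ∀ y, ‖iteratedFDeriv ℝ j (t N i) y‖ ≤ (1 / 2) ^ i := by
    intro N i j hj y
    refine (hb (N + i) i (by omega) j hj y).trans ?_
    exact pow_le_pow_of_le_one (by norm_num) (by norm_num) (by omega)
  have hgeom : Summable fun i : ℕ => (1 / 2 : ℝ) ^ i :=
    summable_geometric_of_lt_one (by norm_num) (by norm_num)
  have hT : ∀ N, ContDiff ℝ ∞ fun y => ∑' i, t N i y := by
    intro N
    refine contDiff_tsum_of_eventually (N := ⊤) (v := fun _ i => (1 / 2) ^ i) (ht N)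
      (fun _ _ => hgeom) fun j _ => ?_
    rw [Nat.cofinite_eq_atTop]
    filter_upwards [eventually_gt_atTop j] with i hi y
    exact htb N i j hi y
  have hsm : ∀ N y, Summable fun i => t N i y := by
    intro N y
    refine Summable.of_norm_bounded_eventually hgeom ?_
    rw [Nat.cofinite_eq_atTop]
    filter_upwards [eventually_gt_atTop 0] with i hi
    have := htb N i 0 hi y
    rwa [norm_iteratedFDeriv_zero] at this
  refine ⟨fun y => ∑' i, t 0 i y, hT 0, fun N => ?_⟩
  let r : ℕ → ℝ → ℝ := fun k s => (1 - χ ((ε k)⁻¹ * s)) * (s ^ N)⁻¹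
  have hr : ∀ k, ContDiff ℝ ∞ (r k) := by
    intro k
    rw [contDiff_iff_contDiffAt]
    intro s
    rcases eq_or_ne s 0 with rfl | hs
    · have h0 : r k =ᶠ[𝓝 0] fun _ => 0 := by
        have h1 : Tendsto (fun s : ℝ => (ε k)⁻¹ * s) (𝓝 0) (𝓝 0) := by
          have : Continuous fun s : ℝ => (ε k)⁻¹ * s := by fun_prop
          simpa using this.tendsto 0
        filter_upwards [h1.eventually χ.eventuallyEq_one] with s hs
        have hs' : χ ((ε k)⁻¹ * s) = 1 := hs
        simp [r, hs']
      exact contDiffAt_const.congr_of_eventuallyEq h0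
    · have hχ : ContDiff ℝ ∞ fun s : ℝ => χ ((ε k)⁻¹ * s) :=
        χ.contDiff.comp (contDiff_const.mul contDiff_id)
      exact (contDiff_const.sub hχ).contDiffAt.mul
        ((contDiffAt_id.pow N).inv (pow_ne_zero N hs))
  have hrs : ∀ k s, s ^ N * r k s = 1 - χ ((ε k)⁻¹ * s) := by
    intro k s
    rcases eq_or_ne s 0 with rfl | hs
    · have : χ (0 : ℝ) = 1 := χ.eventuallyEq_one.self_of_nhds
      simp [r, this]
    · simp only [r]
      field_simp
  refine ⟨fun y => (∑' i, t N i y) - ∑ k ∈ Finset.range N, y.1 ^ k * r k y.1 * f k y.2,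
    (hT N).sub (ContDiff.sum fun k _ => (((contDiff_fst.pow k).mul
      ((hr k).comp contDiff_fst)).mul ((hf k).comp contDiff_snd))), fun y => ?_⟩
  have h1 := (hsm 0 y).sum_add_tsum_nat_add N
  have h2 : ∀ i, t 0 (i + N) y = y.1 ^ N * t N i y := by
    intro i
    simp only [t, zero_add, add_comm i N, pow_add]
    ring
  simp only [h2, tsum_mul_left] at h1
  beta_reduce
  rw [← h1, mul_sub, Finset.mul_sum]
  have h3 : ∑ k ∈ Finset.range N, t 0 k y = ∑ k ∈ Finset.range N, y.1 ^ k * f k y.2 -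
      ∑ k ∈ Finset.range N, y.1 ^ N * (y.1 ^ k * r k y.1 * f k y.2) := by
    rw [← Finset.sum_sub_distrib]
    refine Finset.sum_congr rfl fun k _ => ?_
    simp only [t, zero_add]
    linear_combination (y.1 ^ k * f k y.2) * hrs k y.1
  rw [h3]
  ring

end Borel

section Hadamard

variable {E : Type} [NormedAddCommGroup E] [NormedSpace ℝ E]

/-- Hadamard's lemma: a smooth function minus its value at the projection to a hyperplane
`ℓ = 0` along `e` is divisible by `ℓ`. -/
lemma exists_hadamard_quotient (l : E →L[ℝ] ℝ) (e : E) {h : E → ℝ} (hh : ContDiff ℝ ∞ h) :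
    ∃ A : E → ℝ, ContDiff ℝ ∞ A ∧ ∀ z, h z - h (z - l z • e) = l z * A z := by
  have hg : ContDiff ℝ ∞ fun y : ℝ × E =>
      fderiv ℝ h (y.2 - l y.2 • e + y.1 • l y.2 • e) e := by
    have h1 : ContDiff ℝ ∞ fun y : ℝ × E => y.2 - l y.2 • e + y.1 • l y.2 • e := by
      have hl : ContDiff ℝ ∞ fun y : ℝ × E => l y.2 := l.contDiff.comp contDiff_snd
      exact (contDiff_snd.sub (hl.smul contDiff_const)).add
        (contDiff_fst.smul (hl.smul contDiff_const))
    exact ((hh.fderiv_right (m := ∞) (by simp)).comp h1).clm_apply contDiff_const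
  refine ⟨_, contDiff_integral_unitInterval _ hg, fun z => ?_⟩
  have hd : ∀ s : ℝ, HasDerivAt (fun s : ℝ => h (z - l z • e + s • l z • e))
      (l z * fderiv ℝ h (z - l z • e + s • l z • e) e) s := by
    intro s
    have h1 : HasDerivAt (fun s : ℝ => z - l z • e + s • l z • e) (l z • e) s := by
      simpa using ((hasDerivAt_id s).smul_const (l z • e)).const_add (z - l z • e)
    have h2 := (hh.differentiable (by simp) (z - l z • e + s • l z • e)).hasFDerivAt.comp_hasDerivAt
      s h1
    rw [map_smul, smul_eq_mul] at h2
    exact h2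
  rw [← intervalIntegral.integral_const_mul]
  rw [intervalIntegral.integral_eq_sub_of_hasDerivAt (fun s _ => hd s)]
  · simp
  · have h1 : Continuous fun s : ℝ => (s, z) := by fun_prop
    exact (continuous_const.mul (hg.continuous.comp h1)).intervalIntegrable _ _

/-- Smooth antiderivatives in a direction `e`, preserving invariance in directions in `ℓ = 0`. -/
lemma exists_antiderivative (l : E →L[ℝ] ℝ) (e : E) (hle : l e = 1) {A : E → ℝ}
    (hA : ContDiff ℝ ∞ A) :
    ∃ f : E → ℝ, ContDiff ℝ ∞ f ∧ (∀ z, fderiv ℝ f z e = A z) ∧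
      ∀ w, l w = 0 → (∀ (t : ℝ) z, A (z + t • w) = A z) → ∀ z, fderiv ℝ f z w = 0 := by
  have hg : ContDiff ℝ ∞ fun y : ℝ × E => l y.2 * A (y.2 - l y.2 • e + y.1 • l y.2 • e) := by
    have hl : ContDiff ℝ ∞ fun y : ℝ × E => l y.2 := l.contDiff.comp contDiff_snd
    have h1 : ContDiff ℝ ∞ fun y : ℝ × E => y.2 - l y.2 • e + y.1 • l y.2 • e :=
      (contDiff_snd.sub (hl.smul contDiff_const)).add
        (contDiff_fst.smul (hl.smul contDiff_const))
    exact hl.mul (hA.comp h1)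
  have hf := contDiff_integral_unitInterval _ hg
  set f : E → ℝ := fun z => ∫ s in (0 : ℝ)..1, l z * A (z - l z • e + s • l z • e) with hfdef
  refine ⟨f, hf, fun z => ?_, fun w hw hinv z => ?_⟩
  · set z₀ := z - l z • e with hz₀
    have hlz₀ : l z₀ = 0 := by simp [hz₀, hle]
    have hline : ∀ τ : ℝ, f (z₀ + τ • e) = ∫ s in (0 : ℝ)..τ, A (z₀ + s • e) := by
      intro τ
      have hl : l (z₀ + τ • e) = τ := by simp [hlz₀, hle]
      simp only [hfdef, hl, add_sub_cancel_right]
      have := intervalIntegral.smul_integral_comp_mul_right (a := 0) (b := 1)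
        (fun s : ℝ => A (z₀ + s • e)) τ
      rw [zero_mul, one_mul] at this
      rw [← this, intervalIntegral.integral_const_mul, smul_eq_mul]
      simp only [smul_smul]
    have hc : Continuous fun s : ℝ => A (z₀ + s • e) := hA.continuous.comp (by fun_prop)
    have h1 : HasDerivAt (fun τ : ℝ => f (z₀ + τ • e)) (A (z₀ + l z • e)) (l z) := by
      simp only [hline]
      exact (hc.integral_hasStrictDerivAt 0 (l z)).hasDerivAt
    have hz : z₀ + l z • e = z := by simp [hz₀]
    have h2 : HasDerivAt (fun τ : ℝ => z₀ + τ • e) e (l z) := by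
      simpa using ((hasDerivAt_id (l z)).smul_const e).const_add z₀
    have h3 : HasDerivAt (fun τ : ℝ => f (z₀ + τ • e)) (fderiv ℝ f (z₀ + l z • e) e) (l z) := by
      have hd : HasFDerivAt f (fderiv ℝ f (z₀ + l z • e)) (z₀ + l z • e) :=
        (hf.differentiable (by simp) (z₀ + l z • e)).hasFDerivAt
      exact hd.comp_hasDerivAt (l z) h2
    rw [hz] at h1 h3
    exact h3.unique h1
  · have hline : ∀ τ : ℝ, f (z + τ • w) = f z := by
      intro τ
      have hl : l (z + τ • w) = l z := by simp [hw]
      simp only [hfdef, hl]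
      refine intervalIntegral.integral_congr fun s _ => ?_
      have := hinv τ (z - l z • e + s • l z • e)
      rw [← this]
      congr 2
      abel
    have h2 : HasDerivAt (fun τ : ℝ => z + τ • w) w 0 := by
      simpa using ((hasDerivAt_id (0 : ℝ)).smul_const w).const_add z
    have hd : HasFDerivAt f (fderiv ℝ f z) (z + (0 : ℝ) • w) := by
      rw [zero_smul, add_zero]
      exact (hf.differentiable (by simp) z).hasFDerivAt
    have h3 := hd.comp_hasDerivAt (0 : ℝ) h2
    have h4 : HasDerivAt (fun τ : ℝ => f (z + τ • w)) 0 0 := by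
      simp only [hline]
      exact hasDerivAt_const _ _
    exact h3.unique h4

end Hadamard

section FormalStep

/-- The field `(v, v p, -p (1 - r))`. -/
def saddleField (r : ℝ × ℝ × ℝ → ℝ) (z : ℝ × ℝ × ℝ) : ℝ × ℝ × ℝ :=
  (z.1, z.1 * z.2.2, -(z.2.2 * (1 - r z)))

lemma contDiff_saddleField {r : ℝ × ℝ × ℝ → ℝ} (hr : ContDiff ℝ ∞ r) :
    ContDiff ℝ ∞ (saddleField r) :=
  contDiff_fst.prodMk ((contDiff_fst.mul contDiff_snd.snd).prodMk
    (contDiff_snd.snd.mul (contDiff_const.sub hr)).neg)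

lemma contDiff_fderiv_apply {E : Type} [NormedAddCommGroup E] [NormedSpace ℝ E]
    {f : E → ℝ} (hf : ContDiff ℝ ∞ f) {W : E → E} (hW : ContDiff ℝ ∞ W) :
    ContDiff ℝ ∞ fun z => fderiv ℝ f z (W z) :=
  (hf.fderiv_right (m := ∞) (by simp)).clm_apply hW

lemma exists_formal_step {r R : ℝ × ℝ × ℝ → ℝ} (hr : ContDiff ℝ ∞ r) (hrb : ∀ z, |r z| ≤ 1 / 2)
    (hR : ContDiff ℝ ∞ R) (hR0 : ∀ x, R (0, x, 0) = 0) :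
    ∃ f R' : ℝ × ℝ × ℝ → ℝ, ContDiff ℝ ∞ f ∧ ContDiff ℝ ∞ R' ∧ (∀ x, R' (0, x, 0) = 0) ∧
      ∀ z, fderiv ℝ f z (saddleField r z) = R z - z.1 * z.2.2 * R' z := by
  let lv : ℝ × ℝ × ℝ →L[ℝ] ℝ := ContinuousLinearMap.fst ℝ ℝ (ℝ × ℝ)
  let lx : ℝ × ℝ × ℝ →L[ℝ] ℝ :=
    (ContinuousLinearMap.fst ℝ ℝ ℝ).comp (ContinuousLinearMap.snd ℝ ℝ (ℝ × ℝ))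
  let lp : ℝ × ℝ × ℝ →L[ℝ] ℝ :=
    (ContinuousLinearMap.snd ℝ ℝ ℝ).comp (ContinuousLinearMap.snd ℝ ℝ (ℝ × ℝ))
  let ev : ℝ × ℝ × ℝ := (1, 0, 0)
  let ex : ℝ × ℝ × ℝ := (0, 1, 0)
  let ep : ℝ × ℝ × ℝ := (0, 0, 1)
  have hev : ∀ z : ℝ × ℝ × ℝ, z - lv z • ev = (0, z.2.1, z.2.2) := fun z => by
    ext <;> simp [lv, ev]
  have hep : ∀ z : ℝ × ℝ × ℝ, z - lp z • ep = (z.1, z.2.1, 0) := fun z => by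
    ext <;> simp [lp, ep]
  have hπv : ContDiff ℝ ∞ fun z : ℝ × ℝ × ℝ => ((0, z.2.1, z.2.2) : ℝ × ℝ × ℝ) := by fun_prop
  have hπp : ContDiff ℝ ∞ fun z : ℝ × ℝ × ℝ => ((z.1, z.2.1, 0) : ℝ × ℝ × ℝ) := by fun_prop
  have hπx : ContDiff ℝ ∞ fun z : ℝ × ℝ × ℝ => ((0, z.2.1, 0) : ℝ × ℝ × ℝ) := by fun_prop
  obtain ⟨A, hA, hAe⟩ := exists_hadamard_quotient lv ev hR
  obtain ⟨B, hB, hBe⟩ := exists_hadamard_quotient lp ep hR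
  obtain ⟨S, hS, hSe⟩ := exists_hadamard_quotient lp ep hA
  obtain ⟨q, hq, hqe⟩ := exists_hadamard_quotient lv ev hr
  simp only [hev, hep] at hAe hBe hSe hqe
  have hpos : ∀ z, 1 - r z ≠ 0 := fun z => by
    have := abs_le.1 (hrb z); intro h; linarith
  let b : ℝ × ℝ × ℝ → ℝ := fun z => B (0, z.2.1, z.2.2) / (1 - r (0, z.2.1, z.2.2))
  have hb : ContDiff ℝ ∞ b :=
    (hB.comp hπv).div (contDiff_const.sub (hr.comp hπv)) fun z => hpos _
  obtain ⟨f₁, hf₁, hf₁v, hf₁i⟩ := exists_antiderivative lv ev (by simp [lv, ev])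
    (A := fun z => A (z.1, z.2.1, 0)) (hA.comp hπp)
  obtain ⟨f₀, hf₀, hf₀p, hf₀i⟩ := exists_antiderivative lp ep (by simp [lp, ep])
    (A := fun z => -b z) hb.neg
  have hf₁p := hf₁i ep (by simp [lv, ep]) (fun t z => by simp [ep])
  have hf₀v := hf₀i ev (by simp [lp, ev]) (fun t z => by
    have h : (z + t • ev).2 = z.2 := by ext <;> simp [ev]
    simp only [b, h])
  let Q : ℝ × ℝ × ℝ → ℝ := fun z =>
    S z - fderiv ℝ f₁ z ex - fderiv ℝ f₀ z ex + q z * b z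
  have hQ : ContDiff ℝ ∞ Q :=
    ((hS.sub (contDiff_fderiv_apply hf₁ contDiff_const)).sub
      (contDiff_fderiv_apply hf₀ contDiff_const)).add (hq.mul hb)
  obtain ⟨g, hg, hgx, hgi⟩ := exists_antiderivative lx ex (by simp [lx, ex])
    (A := fun z => Q (0, z.2.1, 0)) (hQ.comp hπx)
  have hgv := hgi ev (by simp [lx, ev]) (fun t z => by simp [ev])
  have hgp := hgi ep (by simp [lx, ep]) (fun t z => by simp [ep])
  refine ⟨fun z => f₁ z + f₀ z + g z, fun z => Q z - Q (0, z.2.1, 0), (hf₁.add hf₀).add hg,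
    hQ.sub (hQ.comp hπx), fun x => by simp, fun z => ?_⟩
  have hY : saddleField r z = z.1 • ev + (z.1 * z.2.2) • ex + (-(z.2.2 * (1 - r z))) • ep := by
    ext <;> simp [saddleField, ev, ex, ep]
  have hsum : fderiv ℝ (fun z => f₁ z + f₀ z + g z) z =
      fderiv ℝ f₁ z + fderiv ℝ f₀ z + fderiv ℝ g z :=
    (((hf₁.differentiable (by simp) z).hasFDerivAt.add
      (hf₀.differentiable (by simp) z).hasFDerivAt).add
      (hg.differentiable (by simp) z).hasFDerivAt).fderiv
  rw [hsum, hY]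
  simp only [add_apply, map_add, map_smul, smul_eq_mul, hf₁v, hf₁p, hf₀v, hf₀p,
    hgv, hgp, hgx]
  have e1 : R z - R (0, z.2.1, z.2.2) = z.1 * A z := hAe z
  have e2 : R (0, z.2.1, z.2.2) - R (0, z.2.1, 0) = z.2.2 * B (0, z.2.1, z.2.2) :=
    hBe (0, z.2.1, z.2.2)
  have e3 : A z - A (z.1, z.2.1, 0) = z.2.2 * S z := hSe z
  have e4 : r z - r (0, z.2.1, z.2.2) = z.1 * q z := hqe z
  have e5 : b z * (1 - r (0, z.2.1, z.2.2)) = B (0, z.2.1, z.2.2) :=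
    div_mul_cancel₀ _ (hpos _)
  rw [hR0, ← e5] at e2
  have hQz : Q z = S z - fderiv ℝ f₁ z ex - fderiv ℝ f₀ z ex + q z * b z := rfl
  rw [hQz]
  linear_combination (-1 : ℝ) * e1 - e2 - z.1 * e3 - z.2.2 * b z * e4

end FormalStep

section Bump

variable {E : Type} [NormedAddCommGroup E] [NormedSpace ℝ E] [FiniteDimensional ℝ E]

/-- A smooth cutoff near a point, equal to one near the point and supported in a given set. -/
lemma exists_contDiff_cutoff {a : E} {s : Set E} (hs : s ∈ 𝓝 a) :
    ∃ ψ : E → ℝ, ContDiff ℝ ∞ ψ ∧ HasCompactSupport ψ ∧ tsupport ψ ⊆ s ∧ (∀ᶠ z in 𝓝 a, ψ z = 1) ∧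
      ∀ z, 0 ≤ ψ z ∧ ψ z ≤ 1 := by
  obtain ⟨ε, hε, hεs⟩ := Metric.nhds_basis_closedBall.mem_iff.1 hs
  let χ : ContDiffBump a := ⟨ε / 2, ε, by positivity, by linarith⟩
  exact ⟨χ, χ.contDiff, χ.hasCompactSupport, by rw [χ.tsupport_eq]; exact hεs,
    χ.eventuallyEq_one, fun z => ⟨χ.nonneg, χ.le_one⟩⟩

/-- A function that is smooth near a point agrees near it with a globally smooth function. -/
lemma exists_contDiff_cutoff_mul {a : E} {f : E → ℝ} (hf : ∀ᶠ z in 𝓝 a, ContDiffAt ℝ ∞ f z)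
    {s : Set E} (hs : s ∈ 𝓝 a) :
    ∃ ψ : E → ℝ, ContDiff ℝ ∞ ψ ∧ HasCompactSupport ψ ∧ tsupport ψ ⊆ s ∧ (∀ᶠ z in 𝓝 a, ψ z = 1) ∧
      (∀ z, 0 ≤ ψ z ∧ ψ z ≤ 1) ∧ ContDiff ℝ ∞ fun z => ψ z * f z := by
  obtain ⟨ψ, h1, h2, h3, h4, h5⟩ := exists_contDiff_cutoff (Filter.inter_mem hs hf)
  refine ⟨ψ, h1, h2, fun z hz => (h3 hz).1, h4, h5, contDiff_iff_contDiffAt.2 fun z => ?_⟩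
  by_cases hz : z ∈ tsupport ψ
  · exact h1.contDiffAt.mul (h3 hz).2
  · have : (fun z => ψ z * f z) =ᶠ[𝓝 z] fun _ => 0 := by
      filter_upwards [notMem_tsupport_iff_eventuallyEq.1 hz] with y hy
      rw [hy]
      simp
    exact contDiffAt_const.congr_of_eventuallyEq this

end Bump

section Cohomological

variable {r : ℝ × ℝ × ℝ → ℝ}

lemma fderiv_mul_apply {E : Type} [NormedAddCommGroup E] [NormedSpace ℝ E] {f g : E → ℝ}
    (hf : ContDiff ℝ ∞ f) (hg : ContDiff ℝ ∞ g) (z w : E) :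
    fderiv ℝ (fun z => f z * g z) z w = f z * fderiv ℝ g z w + g z * fderiv ℝ f z w := by
  rw [fderiv_fun_mul (hf.differentiable (by simp) z) (hg.differentiable (by simp) z)]
  simp

lemma fderiv_add_apply' {E : Type} [NormedAddCommGroup E] [NormedSpace ℝ E] {f g : E → ℝ}
    (hf : ContDiff ℝ ∞ f) (hg : ContDiff ℝ ∞ g) (z w : E) :
    fderiv ℝ (fun z => f z + g z) z w = fderiv ℝ f z w + fderiv ℝ g z w := by
  rw [fderiv_fun_add (hf.differentiable (by simp) z) (hg.differentiable (by simp) z)]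
  simp

lemma fderiv_exp_apply {E : Type} [NormedAddCommGroup E] [NormedSpace ℝ E] {f : E → ℝ}
    (hf : ContDiff ℝ ∞ f) (z w : E) :
    fderiv ℝ (fun z => Real.exp (f z)) z w = Real.exp (f z) * fderiv ℝ f z w := by
  rw [(hf.differentiable (by simp) z).hasFDerivAt.exp.fderiv]
  simp

lemma fderiv_coordinates_apply (z w : ℝ × ℝ × ℝ) :
    fderiv ℝ (fun z : ℝ × ℝ × ℝ => z.1) z w = w.1 ∧
    fderiv ℝ (fun z : ℝ × ℝ × ℝ => z.2.1) z w = w.2.1 ∧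
    fderiv ℝ (fun z : ℝ × ℝ × ℝ => z.2.2) z w = w.2.2 := by
  refine ⟨?_, ?_, ?_⟩
  · rw [(hasFDerivAt_fst (𝕜 := ℝ) (p := z)).fderiv]; rfl
  · have h := ((hasFDerivAt_fst (𝕜 := ℝ) (p := z.2)).comp z (hasFDerivAt_snd (𝕜 := ℝ))).fderiv
    exact congrArg (fun L => L w) h
  · have h := ((hasFDerivAt_snd (𝕜 := ℝ) (p := z.2)).comp z (hasFDerivAt_snd (𝕜 := ℝ))).fderiv
    exact congrArg (fun L => L w) h

lemma fderiv_saddle_product (z : ℝ × ℝ × ℝ) :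
    fderiv ℝ (fun z : ℝ × ℝ × ℝ => z.1 * z.2.2) z (saddleField r z) = z.1 * z.2.2 * r z := by
  rw [fderiv_mul_apply contDiff_fst contDiff_snd.snd, (fderiv_coordinates_apply z _).1,
    (fderiv_coordinates_apply z _).2.2]
  simp only [saddleField]
  ring

/-- Derivative of `û ^ k * f` along a field with `û̇ = û s`. -/
lemma fderiv_pow_mul {U s f : ℝ × ℝ × ℝ → ℝ} (hU : ContDiff ℝ ∞ U)
    (hUs : ∀ z, fderiv ℝ U z (saddleField r z) = U z * s z) (hf : ContDiff ℝ ∞ f) (k : ℕ)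
    (z : ℝ × ℝ × ℝ) :
    fderiv ℝ (fun z => U z ^ k * f z) z (saddleField r z) =
      U z ^ k * (fderiv ℝ f z (saddleField r z) + k * s z * f z) := by
  have hpow : ∀ k : ℕ, fderiv ℝ (fun z => U z ^ k) z (saddleField r z) = k * U z ^ k * s z := by
    intro k
    induction k with
    | zero => simp
    | succ k ih =>
      simp only [pow_succ]
      rw [fderiv_mul_apply (hU.pow k) hU, ih, hUs]
      push_cast
      ring
  rw [fderiv_mul_apply (hU.pow k) hf, hpow]
  ring

/-- The formal solution: a sequence of coefficients in powers of an almost first integral. -/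
lemma exists_formal_solution (hr : ContDiff ℝ ∞ r) (hrb : ∀ z, |r z| ≤ 1 / 2)
    (hr0 : ∀ x, r (0, x, 0) = 0) {R : ℝ × ℝ × ℝ → ℝ} (hR : ContDiff ℝ ∞ R)
    (hR0 : ∀ x, R (0, x, 0) = 0) :
    ∃ (φ s : ℝ × ℝ × ℝ → ℝ) (f T : ℕ → ℝ × ℝ × ℝ → ℝ), ContDiff ℝ ∞ φ ∧ ContDiff ℝ ∞ s ∧
      (∀ k, ContDiff ℝ ∞ (f k)) ∧ (∀ k, ContDiff ℝ ∞ (T k)) ∧ T 0 = R ∧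
      (∀ z, fderiv ℝ (fun z : ℝ × ℝ × ℝ => z.1 * z.2.2 * Real.exp (-φ z)) z (saddleField r z) =
        z.1 * z.2.2 * Real.exp (-φ z) * s z) ∧
      ∀ k z, fderiv ℝ (f k) z (saddleField r z) =
        T k z - z.1 * z.2.2 * Real.exp (-φ z) * T (k + 1) z - k * s z * f k z := by
  obtain ⟨φ, S, hφ, hS, hS0, hφS⟩ := exists_formal_step hr hrb hr hr0
  have hstep : ∀ (k : ℕ) (T : {T : ℝ × ℝ × ℝ → ℝ // ContDiff ℝ ∞ T ∧ ∀ x, T (0, x, 0) = 0}),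
      ∃ (f : ℝ × ℝ × ℝ → ℝ) (T' : {T : ℝ × ℝ × ℝ → ℝ // ContDiff ℝ ∞ T ∧ ∀ x, T (0, x, 0) = 0}),
        ContDiff ℝ ∞ f ∧ ∀ z, fderiv ℝ f z (saddleField r z) =
          T.1 z - z.1 * z.2.2 * Real.exp (-φ z) * T'.1 z - k * (z.1 * z.2.2 * S z) * f z := by
    rintro k ⟨T, hT, hT0⟩
    obtain ⟨f, R', hf, hR', hR'0, hfe⟩ := exists_formal_step hr hrb hT hT0
    refine ⟨f, ⟨fun z => Real.exp (φ z) * (R' z - k * S z * f z),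
      hφ.exp.mul (hR'.sub ((contDiff_const.mul hS).mul hf)), fun x => ?_⟩, hf, fun z => ?_⟩
    · simp [hR'0, hS0]
    · rw [hfe]
      have : Real.exp (-φ z) * Real.exp (φ z) = 1 := by rw [← Real.exp_add]; simp
      linear_combination z.1 * z.2.2 * (R' z - k * S z * f z) * this
  choose f T' hf hfe using hstep
  let T : ℕ → {T : ℝ × ℝ × ℝ → ℝ // ContDiff ℝ ∞ T ∧ ∀ x, T (0, x, 0) = 0} :=
    fun k => Nat.rec ⟨R, hR, hR0⟩ (fun k T => T' k T) k
  refine ⟨φ, fun z => z.1 * z.2.2 * S z, fun k => f k (T k), fun k => (T k).1, hφ,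
    (contDiff_fst.mul contDiff_snd.snd).mul hS, fun k => hf k _, fun k => (T k).2.1, rfl,
    fun z => ?_, fun k z => hfe k (T k) z⟩
  rw [fderiv_mul_apply (contDiff_fst.mul contDiff_snd.snd) hφ.neg.exp, fderiv_saddle_product,
    fderiv_exp_apply hφ.neg]
  have : fderiv ℝ (fun z => -φ z) z (saddleField r z) = -(r z - z.1 * z.2.2 * S z) := by
    rw [fderiv_fun_neg, neg_apply, hφS]
  rw [this]
  ring

/-- Solvability of the cohomological equation for the field `(v, v p, -p (1 - r))`. -/
theorem exists_cohomological_solution (hr : ContDiff ℝ ∞ r) (hrc : HasCompactSupport r)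
    (hrb : ∀ z, |r z| ≤ 1 / 2)
    (hr0 : ∀ x, r (0, x, 0) = 0) {R : ℝ × ℝ × ℝ → ℝ} (hR : ContDiff ℝ ∞ R)
    (hR0 : ∀ x, R (0, x, 0) = 0) :
    ∃ f : ℝ × ℝ × ℝ → ℝ, ContDiff ℝ ∞ f ∧ ∀ᶠ z in 𝓝 0, fderiv ℝ f z (saddleField r z) = R z := by
  obtain ⟨φ, s, f, T, hφ, hs, hf, hT, hT0, hUs, hfT⟩ := exists_formal_solution hr hrb hr0 hR hR0
  set U : ℝ × ℝ × ℝ → ℝ := fun z => z.1 * z.2.2 * Real.exp (-φ z) with hUdef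
  have hU : ContDiff ℝ ∞ U := (contDiff_fst.mul contDiff_snd.snd).mul hφ.neg.exp
  have hY := contDiff_saddleField hr
  obtain ⟨ψ, hψ, hψc, -, hψ1, -⟩ := exists_contDiff_cutoff (univ_mem : _ ∈ 𝓝 (0 : ℝ × ℝ × ℝ))
  obtain ⟨F, hF, hFG⟩ := exists_contDiff_expansion (fun k z => ψ z * f k z)
    (fun k => hψ.mul (hf k)) (fun k => hψc.mul_right)
  have hUz : ContDiff ℝ ∞ fun z => (U z, z) := hU.prodMk contDiff_id
  have hFU : ContDiff ℝ ∞ fun z => F (U z, z) := hF.comp hUz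
  have hpartial : ∀ (N : ℕ) z, fderiv ℝ (fun z => ∑ k ∈ Finset.range N, U z ^ k * f k z) z
      (saddleField r z) = R z - U z ^ N * T N z := by
    intro N z
    induction N with
    | zero => simp [hT0]
    | succ N ih =>
      simp only [Finset.sum_range_succ]
      rw [fderiv_add_apply' (ContDiff.sum fun k _ => (hU.pow k).mul (hf k))
        ((hU.pow N).mul (hf N)), ih, fderiv_pow_mul hU hUs (hf N), hfT]
      simp only [hUdef]
      ring
  have hO := eventually_eventually_nhds.2 hψ1
  have hK : ∀ N : ℕ, ∃ K : ℝ × ℝ × ℝ → ℝ, ContDiff ℝ ∞ K ∧ ∀ z, (∀ᶠ y in 𝓝 z, ψ y = 1) →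
      fderiv ℝ (fun z => F (U z, z)) z (saddleField r z) - R z = U z ^ N * K z := by
    intro N
    obtain ⟨G, hG, hFe⟩ := hFG N
    have hg : ContDiff ℝ ∞ fun z => G (U z, z) := hG.comp hUz
    refine ⟨fun z => -T N z + (fderiv ℝ (fun z => G (U z, z)) z (saddleField r z) +
      N * s z * G (U z, z)), (hT N).neg.add ((contDiff_fderiv_apply hg hY).add
        ((contDiff_const.mul hs).mul hg)), fun z hz => ?_⟩
    have heq : (fun z => F (U z, z)) =ᶠ[𝓝 z] fun z =>
        (∑ k ∈ Finset.range N, U z ^ k * f k z) + U z ^ N * G (U z, z) := by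
      filter_upwards [hz] with y hy
      simp [hFe, hy]
    rw [heq.fderiv_eq, fderiv_add_apply' (ContDiff.sum fun k _ => (hU.pow k).mul (hf k))
      ((hU.pow N).mul hg), hpartial, fderiv_pow_mul hU hUs hg]
    ring
  obtain ⟨ψ', hψ', hψ'c, hψ's, hψ'1, -⟩ := exists_contDiff_cutoff hO
  obtain ⟨f', hf', hf'e⟩ := exists_flat_solution_saddle
    (X := fun z => ψ z * (z.1 * z.2.2)) (ρ := r)
    (e := fun z => ψ' z * (fderiv ℝ (fun z => F (U z, z)) z (saddleField r z) - R z))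
    (hψ.mul (contDiff_fst.mul contDiff_snd.snd)) hψc.mul_right hr hrc hrb hψ'c.mul_right
    (fun N => by
      obtain ⟨K, hK, hKe⟩ := hK N
      refine ⟨fun z => ψ' z * (z.1 ^ N * Real.exp (-φ z) ^ N * K z),
        hψ'.mul (((contDiff_fst.pow N).mul (hφ.neg.exp.pow N)).mul hK), fun z => ?_⟩
      by_cases hz : z ∈ tsupport ψ'
      · rw [hKe z (hψ's hz)]
        simp only [hUdef, mul_pow]
        ring
      · simp [image_eq_zero_of_notMem_tsupport hz])
  refine ⟨fun z => F (U z, z) - f' z, hFU.sub hf', ?_⟩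
  filter_upwards [hf'e, hψ'1, hψ1] with z h1 h2 h3
  rw [fderiv_fun_sub (hFU.differentiable (by simp) z) (hf'.differentiable (by simp) z), sub_apply]
  rw [h3, one_mul, h2, one_mul] at h1
  have h1' : fderiv ℝ f' z (saddleField r z) = _ := h1
  rw [h1']
  ring

end Cohomological

section GermConj

variable {E : Type} [NormedAddCommGroup E] [NormedSpace ℝ E]

/-- `Φ` is a local smooth diffeomorphism at `a`, sending `a` to `b` and `V` to `h W`. -/
structure IsGermConj (Φ : E → E) (h : E → ℝ) (V W : E → E) (a b : E) : Prop where
  map_eq : Φ a = b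
  smooth : ∀ᶠ z in 𝓝 a, ContDiffAt ℝ ∞ Φ z
  injective : ∀ w, fderiv ℝ Φ a w = 0 → w = 0
  conj : ∀ᶠ z in 𝓝 a, fderiv ℝ Φ z (V z) = h z • W (Φ z)

variable {Φ Ψ : E → E} {h : E → ℝ} {V W X : E → E} {a b c : E}

lemma IsGermConj.comp (hΨ : IsGermConj Ψ (fun _ => 1) W X b c) (hΦ : IsGermConj Φ h V W a b) :
    IsGermConj (Ψ ∘ Φ) h V X a c := by
  have hΦt : Tendsto Φ (𝓝 a) (𝓝 b) := by
    have := hΦ.smooth.self_of_nhds.continuousAt.tendsto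
    rwa [hΦ.map_eq] at this
  have hd : ∀ᶠ z in 𝓝 a, fderiv ℝ (Ψ ∘ Φ) z = (fderiv ℝ Ψ (Φ z)).comp (fderiv ℝ Φ z) := by
    filter_upwards [hΦ.smooth, hΦt.eventually hΨ.smooth] with z h1 h2
    exact fderiv_comp z (h2.differentiableAt (by simp)) (h1.differentiableAt (by simp))
  refine ⟨by simp [hΦ.map_eq, hΨ.map_eq], ?_, fun w hw => ?_, ?_⟩
  · filter_upwards [hΦ.smooth, hΦt.eventually hΨ.smooth] with z h1 h2
    exact h2.comp z h1
  · rw [hd.self_of_nhds, hΦ.map_eq] at hw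
    exact hΦ.injective w (hΨ.injective _ hw)
  · filter_upwards [hd, hΦ.conj, hΦt.eventually hΨ.conj] with z h1 h2 h3
    rw [h1, ContinuousLinearMap.comp_apply, h2, map_smul, h3, one_smul]
    rfl

variable [FiniteDimensional ℝ E]

lemma exists_equiv_of_injective {L : E →L[ℝ] E} (hL : ∀ w, L w = 0 → w = 0) :
    ∃ e : E ≃L[ℝ] E, (e : E →L[ℝ] E) = L := by
  have hinj : Function.Injective (L : E →ₗ[ℝ] E) :=
    (injective_iff_map_eq_zero (L : E →ₗ[ℝ] E)).2 hL
  refine ⟨(LinearEquiv.ofInjectiveEndo (L : E →ₗ[ℝ] E) hinj).toContinuousLinearEquiv, ?_⟩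
  ext w
  rfl

lemma ContDiffAt.exists_local_inverse (hs : ∀ᶠ z in 𝓝 a, ContDiffAt ℝ ∞ Φ z)
    (hi : ∀ w, fderiv ℝ Φ a w = 0 → w = 0) {W : Set E} (hW : W ∈ 𝓝 a) :
    ∃ P : OpenPartialHomeomorph E E, ⇑P = Φ ∧ a ∈ P.source ∧ P.source ⊆ W ∧
      (∀ z ∈ P.source, ContDiffAt ℝ ∞ Φ z) ∧ ∀ y ∈ P.target, ContDiffAt ℝ ∞ P.symm y := by
  obtain ⟨e, he⟩ := exists_equiv_of_injective hi
  refine exists_smooth_openPartialHomeomorph Φ a hs e ?_ hW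
  rw [he]
  exact (hs.self_of_nhds.differentiableAt (by simp)).hasFDerivAt

lemma IsGermConj.exists_symm (hΦ : IsGermConj Φ (fun _ => 1) V W a b) :
    ∃ Ψ, IsGermConj Ψ (fun _ => 1) W V b a := by
  obtain ⟨P, hP, haP, -, hs, hs'⟩ :=
    ContDiffAt.exists_local_inverse hΦ.smooth hΦ.injective hΦ.conj
  have hbP : b ∈ P.target := by
    rw [← hΦ.map_eq, ← hP]; exact P.map_source haP
  have hPb : P.symm b = a := by
    rw [← hΦ.map_eq, ← hP]; exact P.left_inv haP
  have htend : Tendsto P.symm (𝓝 b) (𝓝 a) := by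
    have := (P.continuousAt_symm hbP).tendsto
    rwa [hPb] at this
  have hd : ∀ z ∈ P.source, ∀ w, fderiv ℝ P.symm (Φ z) (fderiv ℝ Φ z w) = w := by
    intro z hz w
    have hz' : Φ z ∈ P.target := by rw [← hP]; exact P.map_source hz
    have h1 : fderiv ℝ (P.symm ∘ Φ) z = (fderiv ℝ P.symm (Φ z)).comp (fderiv ℝ Φ z) :=
      fderiv_comp z ((hs' _ hz').differentiableAt (by simp)) ((hs z hz).differentiableAt (by simp))
    have h2 : P.symm ∘ Φ =ᶠ[𝓝 z] id := by
      filter_upwards [P.open_source.mem_nhds hz] with y hy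
      rw [← hP]
      exact P.left_inv hy
    rw [h2.fderiv_eq, fderiv_id] at h1
    exact (congrArg (fun L => L w) h1).symm
  refine ⟨P.symm, hPb, ?_, fun w hw => ?_, ?_⟩
  · filter_upwards [P.open_target.mem_nhds hbP] with y hy using hs' y hy
  · obtain ⟨e, he⟩ := exists_equiv_of_injective hΦ.injective
    have h1 := hd a haP (e.symm w)
    rw [← he, hΦ.map_eq] at h1
    simp only [ContinuousLinearEquiv.coe_coe, ContinuousLinearEquiv.apply_symm_apply] at h1
    rw [hw] at h1
    simpa using h1.symm
  · filter_upwards [htend.eventually hΦ.conj, htend.eventually (P.open_source.mem_nhds haP),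
      P.open_target.mem_nhds hbP] with y h1 h2 h3
    have hy : Φ (P.symm y) = y := by rw [← hP]; exact P.right_inv h3
    have h4 := hd _ h2 (V (P.symm y))
    rw [h1, hy, one_smul] at h4
    rw [h4, one_smul]

end GermConj

/-- The model field `(ξ, -η, ξ η)`. -/
def modelField (y : ℝ × ℝ × ℝ) : ℝ × ℝ × ℝ := (y.1, -y.2.1, y.1 * y.2.1)

lemma fderiv_triple_apply {E : Type} [NormedAddCommGroup E] [NormedSpace ℝ E] {f g h : E → ℝ}
    {z : E} (hf : DifferentiableAt ℝ f z) (hg : DifferentiableAt ℝ g z)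
    (hh : DifferentiableAt ℝ h z) (w : E) :
    fderiv ℝ (fun z => (f z, g z, h z)) z w = (fderiv ℝ f z w, fderiv ℝ g z w, fderiv ℝ h z w) := by
  rw [(hf.hasFDerivAt.prodMk (hg.hasFDerivAt.prodMk hh.hasFDerivAt)).fderiv]
  rfl

theorem exists_germConj_model {r : ℝ × ℝ × ℝ → ℝ} (hr : ContDiff ℝ ∞ r) (hrc : HasCompactSupport r)
    (hrb : ∀ z, |r z| ≤ 1 / 2) (hr0 : ∀ x, r (0, x, 0) = 0) :
    ∃ Φ, IsGermConj Φ (fun _ => 1) (saddleField r) modelField 0 0 := by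
  obtain ⟨f, hf, hfe⟩ := exists_cohomological_solution hr hrc hrb hr0 hr hr0
  let lx : ℝ × ℝ × ℝ →L[ℝ] ℝ :=
    (ContinuousLinearMap.fst ℝ ℝ ℝ).comp (ContinuousLinearMap.snd ℝ ℝ (ℝ × ℝ))
  let ev : ℝ × ℝ × ℝ := (1, 0, 0)
  let ex : ℝ × ℝ × ℝ := (0, 1, 0)
  let ep : ℝ × ℝ × ℝ := (0, 0, 1)
  have hbasis : ∀ w : ℝ × ℝ × ℝ, w = w.1 • ev + w.2.1 • ex + w.2.2 • ep := fun w => by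
    ext <;> simp [ev, ex, ep]
  let A : ℝ × ℝ × ℝ → ℝ := fun z => Real.exp (-f (0, z.2.1, 0))
  have hA : ContDiff ℝ ∞ A := by
    have hπ : ContDiff ℝ ∞ fun z : ℝ × ℝ × ℝ => ((0, z.2.1, 0) : ℝ × ℝ × ℝ) := by fun_prop
    exact (hf.comp hπ).neg.exp
  obtain ⟨g, hg, hgx, hgi⟩ := exists_antiderivative lx ex (by simp [lx, ex]) hA
  have hgv := hgi ev (by simp [lx, ev]) (fun t z => by simp [A, ev])
  have hgp := hgi ep (by simp [lx, ep]) (fun t z => by simp [A, ep])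
  have hgw : ∀ z w, fderiv ℝ g z w = w.2.1 * A z := fun z w => by
    conv_lhs => rw [hbasis w]
    simp [hgv, hgp, hgx]
  obtain ⟨κ, hκ, hκe⟩ := exists_cohomological_solution hr hrc hrb hr0
    (R := fun z => 1 - Real.exp (f z) * A z) (contDiff_const.sub (hf.exp.mul hA))
    (fun x => by simp only [A]; rw [← Real.exp_add]; simp)
  let η : ℝ × ℝ × ℝ → ℝ := fun z => z.2.2 * Real.exp (-f z)
  have hη : ContDiff ℝ ∞ η := contDiff_snd.snd.mul hf.neg.exp
  have hηw : ∀ z w, fderiv ℝ η z w =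
      z.2.2 * (Real.exp (-f z) * -fderiv ℝ f z w) + Real.exp (-f z) * w.2.2 := fun z w => by
    simp only [η]
    rw [fderiv_mul_apply contDiff_snd.snd hf.neg.exp, fderiv_exp_apply hf.neg, fderiv_fun_neg,
      (fderiv_coordinates_apply z w).2.2, neg_apply]
  let U : ℝ × ℝ × ℝ → ℝ := fun z => z.1 * η z
  have hU : ContDiff ℝ ∞ U := contDiff_fst.mul hη
  have hUw : ∀ z w, fderiv ℝ U z w = z.1 * fderiv ℝ η z w + η z * w.1 := fun z w => by
    simp only [U]
    rw [fderiv_mul_apply contDiff_fst hη, (fderiv_coordinates_apply z w).1]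
  let ζ : ℝ × ℝ × ℝ → ℝ := fun z => g z + U z * κ z + -g 0
  have hζ : ContDiff ℝ ∞ ζ := (hg.add (hU.mul hκ)).add contDiff_const
  have hζw : ∀ z w, fderiv ℝ ζ z w =
      w.2.1 * A z + (U z * fderiv ℝ κ z w + κ z * fderiv ℝ U z w) := fun z w => by
    simp only [ζ]
    rw [fderiv_add_apply' (hg.add (hU.mul hκ)) contDiff_const, fderiv_add_apply' hg (hU.mul hκ),
      fderiv_mul_apply hU hκ, hgw]
    simp
  have hD : ∀ z w, fderiv ℝ (fun z => (z.1, η z, ζ z)) z w =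
      (w.1, fderiv ℝ η z w, fderiv ℝ ζ z w) := fun z w => by
    rw [fderiv_triple_apply differentiableAt_fst (hη.differentiable (by simp) z)
      (hζ.differentiable (by simp) z), (fderiv_coordinates_apply z w).1]
  refine ⟨fun z => (z.1, η z, ζ z), ?_, ?_, fun w hw => ?_, ?_⟩
  · simp [η, ζ, U]
  · exact Eventually.of_forall fun z => (contDiff_fst.prodMk (hη.prodMk hζ)).contDiffAt
  · rw [hD] at hw
    simp only [Prod.mk_eq_zero, hζw, hUw, hηw] at hw
    have hη0 : η 0 = 0 := by simp [η]
    have hU0 : U 0 = 0 := by simp [U]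
    obtain ⟨h1, h2, h3⟩ := hw
    simp [Real.exp_ne_zero] at h2
    simp [hη0, hU0, A, Real.exp_ne_zero] at h3
    ext <;> simp [h1, h2, h3]
  · filter_upwards [hfe, hκe] with z h1 h2
    rw [hD, one_smul]
    have h3 : fderiv ℝ η z (saddleField r z) = -η z := by
      rw [hηw, h1]
      simp only [saddleField, η]
      ring
    have h4 : fderiv ℝ ζ z (saddleField r z) = z.1 * η z := by
      rw [hζw, h2, hUw, h3]
      have : Real.exp (-f z) * Real.exp (f z) = 1 := by rw [← Real.exp_add]; simp
      simp only [saddleField, U, η]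
      linear_combination (-z.1 * z.2.2 * A z) * this
    rw [h3, h4]
    rfl

section BriotBouquet

open scoped unitInterval

/-- The path `s ↦ (v s, y + v ∫₀ˢ π, π s)`. -/
noncomputable def leafPath (z : ℝ × ℝ × C(I, ℝ)) : C(I, ℝ × ℝ × ℝ) :=
  ⟨fun s => (z.1 * s, z.2.1 + z.1 * volterraCLM z.2.2 s, z.2.2 s), by fun_prop⟩

/-- The linear part of `leafPath`. -/
noncomputable def leafPathLinear : ℝ × ℝ × C(I, ℝ) →L[ℝ] C(I, ℝ × ℝ × ℝ) :=
  ((ContinuousLinearMap.inl ℝ ℝ (ℝ × ℝ)).compLeftContinuous ℝ I).comp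
      ((ContinuousLinearMap.fst ℝ ℝ (ℝ × C(I, ℝ))).smulRight idPath) +
    (((ContinuousLinearMap.inr ℝ ℝ (ℝ × ℝ)).comp
        (ContinuousLinearMap.inl ℝ ℝ ℝ)).compLeftContinuous ℝ I).comp
      (constPath.comp ((ContinuousLinearMap.fst ℝ ℝ C(I, ℝ)).comp
        (ContinuousLinearMap.snd ℝ ℝ (ℝ × C(I, ℝ))))) +
    (((ContinuousLinearMap.inr ℝ ℝ (ℝ × ℝ)).comp
        (ContinuousLinearMap.inr ℝ ℝ ℝ)).compLeftContinuous ℝ I).comp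
      ((ContinuousLinearMap.snd ℝ ℝ C(I, ℝ)).comp (ContinuousLinearMap.snd ℝ ℝ (ℝ × C(I, ℝ))))

lemma leafPathLinear_apply (z : ℝ × ℝ × C(I, ℝ)) (s : I) :
    leafPathLinear z s = (z.1 * s, z.2.1, z.2.2 s) := by
  simp [leafPathLinear, constPath]
  rfl

/-- The quadratic part of `leafPath`. -/
noncomputable def leafPathVolterra : ℝ × ℝ × C(I, ℝ) →L[ℝ] C(I, ℝ × ℝ × ℝ) :=
  (((ContinuousLinearMap.inr ℝ ℝ (ℝ × ℝ)).comp
      (ContinuousLinearMap.inl ℝ ℝ ℝ)).compLeftContinuous ℝ I).comp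
    (volterraCLM.comp
      ((ContinuousLinearMap.snd ℝ ℝ C(I, ℝ)).comp (ContinuousLinearMap.snd ℝ ℝ (ℝ × C(I, ℝ)))))

lemma leafPath_eq (z : ℝ × ℝ × C(I, ℝ)) :
    leafPath z = leafPathLinear z + z.1 • leafPathVolterra z := by
  ext s <;> simp [leafPath, leafPathLinear_apply, leafPathVolterra]

lemma contDiff_leafPath : ContDiff ℝ ∞ leafPath := by
  rw [show leafPath = fun z => leafPathLinear z + z.1 • leafPathVolterra z from
    funext leafPath_eq]
  exact leafPathLinear.contDiff.add (contDiff_fst.smul leafPathVolterra.contDiff)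

lemma leafPath_zero : leafPath 0 = 0 := by
  rw [leafPath_eq]; simp

lemma hasFDerivAt_leafPath_zero : HasFDerivAt leafPath leafPathLinear 0 := by
  rw [show leafPath = fun z => leafPathLinear z + z.1 • leafPathVolterra z from
    funext leafPath_eq]
  have h := (leafPathLinear.hasFDerivAt (x := 0)).add
    ((hasFDerivAt_fst (𝕜 := ℝ) (p := (0 : ℝ × ℝ × C(I, ℝ)))).smul
      (leafPathVolterra.hasFDerivAt (x := 0)))
  refine h.congr_fderiv ?_
  ext <;> simp

/-- The integral operator whose fixed points are the leaves. -/
noncomputable def leafOperator (g : ℝ × ℝ × ℝ → ℝ) (hg : Continuous g) (z : ℝ × ℝ × C(I, ℝ)) :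
    C(I, ℝ) := averageCLM (postcompMap g hg (leafPath z))

variable {g : ℝ × ℝ × ℝ → ℝ}

lemma contDiff_leafOperator (hg : ContDiff ℝ ∞ g) :
    ContDiff ℝ ∞ (leafOperator g hg.continuous) :=
  (averageCLM (F := ℝ)).contDiff.comp ((contDiff_postcompMap g hg).comp contDiff_leafPath)

lemma leafOperator_zero (hg : Continuous g) (hg0 : g 0 = 0) : leafOperator g hg 0 = 0 := by
  have : postcompMap g hg (leafPath 0) = 0 := by
    rw [leafPath_zero]; ext s; simp [hg0]
  rw [leafOperator, this, map_zero]

lemma exists_hasFDerivAt_leafOperator (hg : ContDiff ℝ ∞ g)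
    (hgP : fderiv ℝ g 0 (0, 0, 1) = 0) :
    ∃ B : ℝ × ℝ × C(I, ℝ) →L[ℝ] C(I, ℝ), HasFDerivAt (leafOperator g hg.continuous) B 0 ∧
      ∀ π, B (0, 0, π) = 0 := by
  have h1 := hasFDerivAt_postcompMap (K := I) g (hg.of_le (by exact_mod_cast le_top)) (leafPath 0)
  have h2 := (averageCLM.hasFDerivAt.comp (leafPath 0) h1).comp (0 : ℝ × ℝ × C(I, ℝ))
    hasFDerivAt_leafPath_zero
  refine ⟨_, h2, fun π => ?_⟩
  have h3 : pointwiseApply (postcompMap (K := I) (fderiv ℝ g)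
      ((hg.of_le (by exact_mod_cast le_top) : ContDiff ℝ 1 g).continuous_fderiv one_ne_zero)
        (leafPath 0)) (leafPathLinear (0, 0, π)) = 0 := by
    ext s
    have h4 : leafPathLinear (0, 0, π) s = π s • ((0, 0, 1) : ℝ × ℝ × ℝ) := by
      rw [leafPathLinear_apply]; simp
    rw [leafPath_zero]
    change fderiv ℝ g 0 (leafPathLinear (0, 0, π) s) = 0
    rw [h4, map_smul, hgP, smul_zero]
  simp only [ContinuousLinearMap.comp_apply]
  rw [h3, map_zero]

/-- Reparametrisation of a path by a contraction of the interval. -/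
def scalePath (s : I) (π : C(I, ℝ)) : C(I, ℝ) := ⟨fun τ => π (s * τ), by fun_prop⟩

lemma norm_scalePath_le (s : I) (π : C(I, ℝ)) : ‖scalePath s π‖ ≤ ‖π‖ :=
  (ContinuousMap.norm_le _ (norm_nonneg _)).2 fun _ => π.norm_coe_le_norm _

lemma pathExtend_scalePath (s : I) (π : C(I, ℝ)) {τ : ℝ} (hτ : τ ∈ Set.Icc (0 : ℝ) 1) :
    pathExtend (scalePath s π) τ = pathExtend π (s * τ) := by
  have h : (s : ℝ) * τ ∈ Set.Icc (0 : ℝ) 1 :=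
    ⟨mul_nonneg s.2.1 hτ.1, mul_le_one₀ s.2.2 hτ.1 hτ.2⟩
  rw [pathExtend_of_mem _ hτ, pathExtend_of_mem _ h]
  rfl

lemma averageCLM_scalePath (s : I) (π : C(I, ℝ)) :
    averageCLM (scalePath s π) = scalePath s (averageCLM π) := by
  ext τ
  change averageCLM (scalePath s π) τ = averageCLM π (s * τ)
  rw [averageCLM_apply, averageCLM_apply]
  refine intervalIntegral.integral_congr fun θ hθ => ?_
  rw [Set.uIcc_of_le zero_le_one] at hθ
  rw [pathExtend_scalePath s π
    ⟨mul_nonneg τ.2.1 hθ.1, mul_le_one₀ τ.2.2 hθ.1 hθ.2⟩]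
  congr 1
  push_cast
  ring

lemma leafOperator_scalePath (hg : Continuous g) (s : I) (v y : ℝ) (π : C(I, ℝ)) :
    leafOperator g hg (s * v, y, scalePath s π) = scalePath s (leafOperator g hg (v, y, π)) := by
  rw [leafOperator, leafOperator, ← averageCLM_scalePath]
  congr 1
  ext τ
  change g (s * v * τ, y + s * v * volterraCLM (scalePath s π) τ, π (s * τ)) =
    g (v * (s * τ : I), y + v * volterraCLM π (s * τ), π (s * τ))
  congr 2
  · push_cast; ring
  · congr 1
    rw [volterraCLM_eq_smul, volterraCLM_eq_smul, averageCLM_scalePath]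
    change y + s * v * (τ * averageCLM π (s * τ)) = y + v * ((s * τ : I) * averageCLM π (s * τ))
    push_cast; ring

/-- The smooth family of leaves, as fixed points of the integral operator, compatible with
scaling. -/
lemma exists_leaf_family (hg : ContDiff ℝ ∞ g) (hg0 : g 0 = 0)
    (hgP : fderiv ℝ g 0 (0, 0, 1) = 0) :
    ∃ S : ℝ × ℝ → C(I, ℝ), S 0 = 0 ∧ (∀ᶠ u in 𝓝 0, ContDiffAt ℝ ∞ S u) ∧
      ∀ᶠ u in 𝓝 (0 : ℝ × ℝ), leafOperator g hg.continuous (u.1, u.2, S u) = S u ∧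
        ∀ s : I, S (s * u.1, u.2) = scalePath s (S u) := by
  obtain ⟨B, hB, hB0⟩ := exists_hasFDerivAt_leafOperator hg hgP
  set T := leafOperator g hg.continuous with hT
  have hTs : ContDiff ℝ ∞ T := contDiff_leafOperator hg
  have hT0 : T 0 = 0 := leafOperator_zero hg.continuous hg0
  let ι : C(I, ℝ) →L[ℝ] ℝ × ℝ × C(I, ℝ) :=
    (ContinuousLinearMap.inr ℝ ℝ (ℝ × C(I, ℝ))).comp (ContinuousLinearMap.inr ℝ ℝ C(I, ℝ))
  let Λ : ℝ × ℝ × C(I, ℝ) → ℝ × ℝ × C(I, ℝ) := fun z => z - ι (T z)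
  have hΛ : ∀ z, Λ z = (z.1, z.2.1, z.2.2 - T z) := fun z => by simp [Λ, ι, Prod.ext_iff]
  have hΛs : ContDiff ℝ ∞ Λ := contDiff_id.sub (ι.contDiff.comp hTs)
  have hBι : ∀ x, B (ι x) = 0 := fun x => hB0 x
  let e : (ℝ × ℝ × C(I, ℝ)) ≃L[ℝ] ℝ × ℝ × C(I, ℝ) :=
    ContinuousLinearEquiv.equivOfInverse
      (ContinuousLinearMap.id ℝ _ - ι.comp B) (ContinuousLinearMap.id ℝ _ + ι.comp B)
      (fun x => by simp [hBι]) (fun x => by simp [hBι])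
  have he : HasFDerivAt Λ (e : ℝ × ℝ × C(I, ℝ) →L[ℝ] ℝ × ℝ × C(I, ℝ)) 0 :=
    (hasFDerivAt_id _).sub (ι.hasFDerivAt.comp _ hB)
  obtain ⟨P, hP, h0P, -, -, hPs⟩ := exists_smooth_openPartialHomeomorph Λ 0
    (Eventually.of_forall fun z => hΛs.contDiffAt) e he univ_mem
  have hΛ0 : Λ 0 = 0 := by rw [hΛ, hT0]; simp
  have h0t : (0 : ℝ × ℝ × C(I, ℝ)) ∈ P.target := by
    have := P.map_source h0P
    rwa [hP, hΛ0] at this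
  have hP0 : P.symm 0 = 0 := by
    have := P.left_inv h0P
    rwa [hP, hΛ0] at this
  let j : ℝ × ℝ → ℝ × ℝ × C(I, ℝ) := fun u => (u.1, u.2, 0)
  have hj : ContDiff ℝ ∞ j := contDiff_fst.prodMk (contDiff_snd.prodMk contDiff_const)
  have hj0 : j 0 = 0 := rfl
  have hjt : ∀ᶠ u in 𝓝 0, j u ∈ P.target := by
    have := hj.continuous.tendsto 0
    rw [hj0] at this
    exact this.eventually (P.open_target.mem_nhds h0t)
  let S : ℝ × ℝ → C(I, ℝ) := fun u => (P.symm (j u)).2.2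
  have hS0 : S 0 = 0 := by simp only [S]; rw [hj0, hP0]; rfl
  have hSs : ∀ᶠ u in 𝓝 0, ContDiffAt ℝ ∞ S u := by
    filter_upwards [hjt] with u hu
    have h1 : ContDiffAt ℝ ∞ (fun u => P.symm (j u)) u := (hPs _ hu).comp u hj.contDiffAt
    exact h1.snd.snd
  have hfix : ∀ u, j u ∈ P.target → P.symm (j u) = (u.1, u.2, S u) ∧ T (u.1, u.2, S u) = S u := by
    intro u hu
    have h1 := P.right_inv hu
    rw [hP, hΛ] at h1
    have h2 : P.symm (j u) = (u.1, u.2, S u) := by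
      ext1
      · exact congrArg (fun z => z.1) h1
      · ext1
        · exact congrArg (fun z => z.2.1) h1
        · rfl
    refine ⟨h2, ?_⟩
    have h3 : (P.symm (j u)).2.2 - T (P.symm (j u)) = 0 := congrArg (fun z => z.2.2) h1
    rw [h2] at h3
    exact (sub_eq_zero.1 h3).symm
  have huniq : ∀ v y π, (v, y, π) ∈ P.source → T (v, y, π) = π → S (v, y) = π := by
    intro v y π hs hπ
    have h1 : P (v, y, π) = j (v, y) := by
      rw [hP, hΛ, hπ]; simp [j]
    simp only [S]
    rw [← h1, P.left_inv hs]
  obtain ⟨ε, hε, hεs⟩ := Metric.isOpen_iff.1 P.open_source 0 h0P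
  have hSt : Tendsto S (𝓝 0) (𝓝 0) := by
    have := hSs.self_of_nhds.continuousAt.tendsto
    rwa [hS0] at this
  refine ⟨S, hS0, hSs, ?_⟩
  filter_upwards [hjt, hSt.eventually (Metric.ball_mem_nhds 0 hε), Metric.ball_mem_nhds 0 hε]
    with u h1 h2 h3
  have h4 := (hfix u h1).2
  refine ⟨h4, fun s => huniq _ _ _ (hεs ?_) ?_⟩
  · rw [dist_zero_right] at h2
    rw [mem_ball_zero_iff] at h3 ⊢
    rw [Prod.norm_def] at h3
    have h5 : ‖(s : ℝ) * u.1‖ ≤ ‖u.1‖ := by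
      rw [norm_mul]
      refine mul_le_of_le_one_left (norm_nonneg _) ?_
      rw [Real.norm_of_nonneg s.2.1]
      exact s.2.2
    have h6 := norm_scalePath_le s (S u)
    simp only [Prod.norm_def]
    exact max_lt (h5.trans_lt ((le_max_left _ _).trans_lt h3))
      (max_lt ((le_max_right _ _).trans_lt h3) (h6.trans_lt h2))
  · have h7 := leafOperator_scalePath hg.continuous s u.1 u.2 (S u)
    rw [← hT, h4] at h7
    exact h7

end BriotBouquet

section Leaves

open scoped unitInterval

/-- Euler-type identity from the restriction of a function to a segment. -/
lemma fderiv_scaling_apply {f : ℝ × ℝ → ℝ} {u : ℝ × ℝ} (hf : DifferentiableAt ℝ f u) {φ : ℝ → ℝ}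
    {c : ℝ} (hφ : HasDerivAt φ c 1) (heq : ∀ s ∈ Set.Icc (1 / 2 : ℝ) 1, f (s * u.1, u.2) = φ s) :
    fderiv ℝ f u (u.1, 0) = c := by
  have h1 : HasDerivAt (fun s : ℝ => (s * u.1, u.2)) (u.1, 0) 1 := by
    have := ((hasDerivAt_id (1 : ℝ)).mul_const u.1).prodMk (hasDerivAt_const (1 : ℝ) u.2)
    rwa [one_mul] at this
  have hf' : HasFDerivAt f (fderiv ℝ f u) ((1 : ℝ) * u.1, u.2) := by
    rw [one_mul]; exact hf.hasFDerivAt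
  have h2 : HasDerivAt (fun s : ℝ => f (s * u.1, u.2)) (fderiv ℝ f u (u.1, 0)) 1 :=
    hf'.comp_hasDerivAt 1 h1
  have h3 : HasDerivWithinAt (fun s : ℝ => f (s * u.1, u.2)) c (Set.Icc (1 / 2) 1) 1 :=
    hφ.hasDerivWithinAt.congr heq (heq 1 (by norm_num))
  exact (uniqueDiffOn_Icc (by norm_num) 1 (by norm_num)).eq_deriv _ h2.hasDerivWithinAt h3

lemma hasDerivAt_integral_pathExtend (γ : C(I, ℝ)) :
    HasDerivAt (fun s : ℝ => ∫ τ in (0 : ℝ)..s, pathExtend γ τ) (γ 1) 1 := by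
  have h := ((continuous_pathExtend γ).integral_hasStrictDerivAt 0 1).hasDerivAt
  rwa [pathExtend_of_mem γ (s := 1) (by simp)] at h

/-- The smooth family of solutions of the Briot–Bouquet equation `v X'' = -X' + g (v, X, X')`. -/
lemma exists_leaf_functions {g : ℝ × ℝ × ℝ → ℝ} (hg : ContDiff ℝ ∞ g) (hg0 : g 0 = 0)
    (hgP : fderiv ℝ g 0 (0, 0, 1) = 0) :
    ∃ X Q : ℝ × ℝ → ℝ, ContDiff ℝ ∞ X ∧ ContDiff ℝ ∞ Q ∧ Q 0 = 0 ∧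
      (∀ᶠ y in 𝓝 (0 : ℝ), X (0, y) = y) ∧
      ∀ᶠ u in 𝓝 (0 : ℝ × ℝ), fderiv ℝ X u (u.1, 0) = u.1 * Q u ∧
        fderiv ℝ Q u (u.1, 0) = g (u.1, X u, Q u) - Q u := by
  obtain ⟨S, hS0, hSs, hS⟩ := exists_leaf_family hg hg0 hgP
  let Q : ℝ × ℝ → ℝ := fun u => S u 1
  let X : ℝ × ℝ → ℝ := fun u => u.2 + u.1 * volterraCLM (S u) 1
  have hQs : ∀ᶠ u in 𝓝 0, ContDiffAt ℝ ∞ Q u := by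
    filter_upwards [hSs] with u hu
    exact (ContinuousMap.evalCLM ℝ (1 : I)).contDiff.contDiffAt.comp u hu
  have hXs : ∀ᶠ u in 𝓝 0, ContDiffAt ℝ ∞ X u := by
    filter_upwards [hSs] with u hu
    exact contDiffAt_snd.add (contDiffAt_fst.mul
      (((ContinuousMap.evalCLM ℝ (1 : I)).comp (volterraCLM (F := ℝ))).contDiff.contDiffAt.comp u hu))
  have hX : ∀ᶠ u in 𝓝 (0 : ℝ × ℝ), fderiv ℝ X u (u.1, 0) = u.1 * Q u := by
    filter_upwards [hS, hXs] with u hu hXu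
    refine fderiv_scaling_apply (hXu.differentiableAt (by simp))
      (φ := fun s => u.2 + u.1 * ∫ τ in (0 : ℝ)..s, pathExtend (S u) τ)
      (((hasDerivAt_integral_pathExtend (S u)).const_mul u.1).const_add u.2) fun s hs' => ?_
    have hs : s ∈ Set.Icc (0 : ℝ) 1 := ⟨by linarith [hs'.1], hs'.2⟩
    have h1 := hu.2 ⟨s, hs⟩
    simp only [X]
    have h2 : S (s * u.1, u.2) = scalePath ⟨s, hs⟩ (S u) := h1
    have h3 := volterraCLM_apply (S u) ⟨s, hs⟩
    rw [volterraCLM_eq_smul] at h3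
    rw [← h3, h2, volterraCLM_eq_smul, averageCLM_scalePath]
    change u.2 + s * u.1 * (1 * averageCLM (S u) (⟨s, hs⟩ * 1)) =
      u.2 + u.1 * (s * averageCLM (S u) ⟨s, hs⟩)
    rw [mul_one]
    ring
  have hQ : ∀ᶠ u in 𝓝 (0 : ℝ × ℝ), fderiv ℝ Q u (u.1, 0) = g (u.1, X u, Q u) - Q u := by
    filter_upwards [hS, hQs] with u hu hQu
    let G : C(I, ℝ) := postcompMap g hg.continuous (leafPath (u.1, u.2, S u))
    have hG1 : G 1 = g (u.1, X u, Q u) := by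
      change g (u.1 * (1 : I), u.2 + u.1 * volterraCLM (S u) 1, S u 1) = _
      rw [Set.Icc.coe_one, mul_one]
    have h4 : averageCLM G = S u := hu.1
    have h5 : ∫ τ in (0 : ℝ)..1, pathExtend G τ = Q u := by
      have h3 := smul_averageCLM G 1
      rw [h4, Set.Icc.coe_one, one_smul] at h3
      exact h3.symm
    rw [← hG1, ← h5]
    refine fderiv_scaling_apply (hQu.differentiableAt (by simp))
      (φ := fun s => s⁻¹ * ∫ τ in (0 : ℝ)..s, pathExtend G τ) ?_ fun s hs' => ?_
    · refine ((hasDerivAt_inv one_ne_zero).mul (hasDerivAt_integral_pathExtend G)).congr_deriv ?_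
      norm_num
      ring
    · have hs : s ∈ Set.Icc (0 : ℝ) 1 := ⟨by linarith [hs'.1], hs'.2⟩
      have hs0 : s ≠ 0 := by linarith [hs'.1]
      have h2 : S (s * u.1, u.2) = scalePath ⟨s, hs⟩ (S u) := hu.2 ⟨s, hs⟩
      have h3 := smul_averageCLM G ⟨s, hs⟩
      rw [h4] at h3
      simp only [Q]
      rw [← h3, h2]
      change S u (⟨s, hs⟩ * 1) = s⁻¹ * (s * S u ⟨s, hs⟩)
      rw [mul_one, inv_mul_cancel_left₀ hs0]
  obtain ⟨ψ, -, -, -, hψ1, -, hψX⟩ := exists_contDiff_cutoff_mul hXs univ_mem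
  obtain ⟨ψ', -, -, -, hψ'1, -, hψ'Q⟩ := exists_contDiff_cutoff_mul hQs univ_mem
  refine ⟨_, _, hψX, hψ'Q, by simp [Q, hS0], ?_, ?_⟩
  · have ht : Tendsto (fun y : ℝ => ((0 : ℝ), y)) (𝓝 0) (𝓝 0) :=
      (by fun_prop : Continuous fun y : ℝ => ((0 : ℝ), y)).tendsto' _ _ rfl
    filter_upwards [ht.eventually hψ1] with y hy
    simp [hy, X]
  · filter_upwards [hX, hQ, hψ1.eventually_nhds, hψ'1.eventually_nhds] with u h1 h2 h3 h4
    have e1 : (fun z => ψ z * X z) =ᶠ[𝓝 u] X := by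
      filter_upwards [h3] with z hz using by rw [hz, one_mul]
    have e2 : (fun z => ψ' z * Q z) =ᶠ[𝓝 u] Q := by
      filter_upwards [h4] with z hz using by rw [hz, one_mul]
    rw [e1.fderiv_eq, e2.fderiv_eq, h3.self_of_nhds, h4.self_of_nhds, one_mul, one_mul]
    exact ⟨h1, h2⟩

end Leaves

section Straightening

/-- The projection forgetting the last coordinate. -/
def dropLast : ℝ × ℝ × ℝ →L[ℝ] ℝ × ℝ :=
  (ContinuousLinearMap.fst ℝ ℝ (ℝ × ℝ)).prod
    ((ContinuousLinearMap.fst ℝ ℝ ℝ).comp (ContinuousLinearMap.snd ℝ ℝ (ℝ × ℝ)))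

@[simp] lemma dropLast_apply (z : ℝ × ℝ × ℝ) : dropLast z = (z.1, z.2.1) := rfl

lemma fderiv_comp_dropLast {F : ℝ × ℝ → ℝ} (z : ℝ × ℝ × ℝ)
    (hF : DifferentiableAt ℝ F (dropLast z)) (w : ℝ × ℝ × ℝ) :
    fderiv ℝ (fun z => F (dropLast z)) z w = fderiv ℝ F (dropLast z) (w.1, w.2.1) := by
  have h := (hF.hasFDerivAt.comp z dropLast.hasFDerivAt).fderiv
  exact congrArg (fun L => L w) h

/-- Straightening of the one-dimensional leaves of the unstable foliation. -/
theorem exists_germConj_saddle_of_contDiff {m : ℝ × ℝ × ℝ → ℝ} (hm : ContDiff ℝ ∞ m)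
    (hm0 : m 0 = 0)
    (hmP : ∀ᶠ z : ℝ × ℝ × ℝ in 𝓝 0, z.1 = 0 → m z = 0 → fderiv ℝ m z (0, 0, 1) = -1) :
    ∃ r Ξ, ContDiff ℝ ∞ r ∧ HasCompactSupport r ∧ (∀ z, |r z| ≤ 1 / 2) ∧
      (∀ x, r (0, x, 0) = 0) ∧
      IsGermConj Ξ (fun _ => 1) (saddleField r) (fun z => (z.1, z.1 * z.2.2, m z)) 0 0 := by
  have hgP : fderiv ℝ (fun z : ℝ × ℝ × ℝ => m z + z.2.2) 0 (0, 0, 1) = 0 := by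
    rw [fderiv_add_apply' hm contDiff_snd.snd, hmP.self_of_nhds rfl hm0,
      (fderiv_coordinates_apply _ _).2.2]
    simp
  obtain ⟨X, Q, hX, hQ, hQ0, hX0, hXQ⟩ := exists_leaf_functions
    (hm.add contDiff_snd.snd : ContDiff ℝ ∞ fun z : ℝ × ℝ × ℝ => m z + z.2.2) (by simp [hm0]) hgP
  let Y : ℝ × ℝ → ℝ := fun u => fderiv ℝ X u (0, 1)
  have hY : ContDiff ℝ ∞ Y := contDiff_fderiv_apply hX contDiff_const
  have hX00 : X 0 = 0 := hX0.self_of_nhds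
  have hY0 : Y 0 = 1 := by
    have h1 : HasDerivAt (fun y : ℝ => ((0 : ℝ), y)) (0, 1) 0 :=
      (hasDerivAt_const _ _).prodMk (hasDerivAt_id _)
    have hd : HasFDerivAt X (fderiv ℝ X 0) ((0 : ℝ), (0 : ℝ)) :=
      (hX.differentiable (by simp) 0).hasFDerivAt
    have h2 : HasDerivAt (fun y : ℝ => X (0, y)) (fderiv ℝ X 0 (0, 1)) 0 :=
      hd.comp_hasDerivAt 0 h1
    exact h2.unique ((hasDerivAt_id (0 : ℝ)).congr_of_eventuallyEq hX0)
  let X' : ℝ × ℝ × ℝ → ℝ := fun z => X (dropLast z)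
  let Q' : ℝ × ℝ × ℝ → ℝ := fun z => Q (dropLast z)
  let Y' : ℝ × ℝ × ℝ → ℝ := fun z => Y (dropLast z)
  have hX' : ContDiff ℝ ∞ X' := hX.comp dropLast.contDiff
  have hQ' : ContDiff ℝ ∞ Q' := hQ.comp dropLast.contDiff
  have hY' : ContDiff ℝ ∞ Y' := hY.comp dropLast.contDiff
  have hX'w : ∀ z w, fderiv ℝ X' z w = fderiv ℝ X (dropLast z) (w.1, w.2.1) := fun z w =>
    fderiv_comp_dropLast z (hX.differentiable (by simp) _) w
  have hQ'w : ∀ z w, fderiv ℝ Q' z w = fderiv ℝ Q (dropLast z) (w.1, w.2.1) := fun z w =>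
    fderiv_comp_dropLast z (hQ.differentiable (by simp) _) w
  have hY'w : ∀ z w, fderiv ℝ Y' z w = fderiv ℝ Y (dropLast z) (w.1, w.2.1) := fun z w =>
    fderiv_comp_dropLast z (hY.differentiable (by simp) _) w
  have hY'0 : Y' 0 = 1 := hY0
  let Z : ℝ × ℝ × ℝ → ℝ := fun z => Q' z + Y' z * z.2.2
  have hZ : ContDiff ℝ ∞ Z := hQ'.add (hY'.mul contDiff_snd.snd)
  have hZw : ∀ z w, fderiv ℝ Z z w = fderiv ℝ Q' z w + (Y' z * w.2.2 + z.2.2 * fderiv ℝ Y' z w) :=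
    fun z w => by
      simp only [Z]
      rw [fderiv_add_apply' hQ' (hY'.mul contDiff_snd.snd),
        fderiv_mul_apply hY' contDiff_snd.snd, (fderiv_coordinates_apply _ _).2.2]
  let h : ℝ × ℝ × ℝ → ℝ := fun z => m (z.1, X' z, Z z)
  have hh : ContDiff ℝ ∞ h := hm.comp (contDiff_fst.prodMk (hX'.prodMk hZ))
  obtain ⟨A, hA, hAe⟩ := exists_hadamard_quotient
    ((ContinuousLinearMap.snd ℝ ℝ ℝ).comp (ContinuousLinearMap.snd ℝ ℝ (ℝ × ℝ)))
    ((0, 0, 1) : ℝ × ℝ × ℝ) hh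
  have hAe' : ∀ z : ℝ × ℝ × ℝ, h z - m (z.1, X' z, Q' z) = z.2.2 * A z := fun z => by
    rw [show z.2.2 * A z = _ from (hAe z).symm]
    simp [h, X', Z, Q', Y']
  have hA0 : ∀ y, A (0, y, 0) = Y (0, y) * fderiv ℝ m (0, X (0, y), Q (0, y)) (0, 0, 1) := by
    intro y
    have h1 : HasDerivAt (fun τ : ℝ => ((0 : ℝ), X (0, y), Q (0, y) + Y (0, y) * τ))
        (0, 0, Y (0, y)) 0 := by
      have := (hasDerivAt_const (0 : ℝ) (0 : ℝ)).prodMk ((hasDerivAt_const (0 : ℝ) (X (0, y))).prodMk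
        (((hasDerivAt_id (0 : ℝ)).const_mul (Y (0, y))).const_add (Q (0, y))))
      rwa [mul_one] at this
    have hd : HasFDerivAt m (fderiv ℝ m (0, X (0, y), Q (0, y)))
        ((0 : ℝ), X (0, y), Q (0, y) + Y (0, y) * 0) := by
      rw [mul_zero, add_zero]
      exact (hm.differentiable (by simp) _).hasFDerivAt
    have h2 : HasDerivAt (fun τ : ℝ => m ((0 : ℝ), X (0, y), Q (0, y) + Y (0, y) * τ))
        (fderiv ℝ m (0, X (0, y), Q (0, y)) (0, 0, Y (0, y))) 0 := hd.comp_hasDerivAt 0 h1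
    have hl : ContDiff ℝ ∞ fun τ : ℝ => A (0, y, τ) :=
      hA.comp (contDiff_const.prodMk (contDiff_const.prodMk contDiff_id))
    have h3 := ((hasDerivAt_id (0 : ℝ)).mul (hl.differentiable (by simp) 0).hasDerivAt).const_add
      (m (0, X (0, y), Q (0, y)))
    have h4 : (fun τ : ℝ => m ((0 : ℝ), X (0, y), Q (0, y) + Y (0, y) * τ)) =
        fun τ : ℝ => m (0, X (0, y), Q (0, y)) + id τ * A (0, y, τ) := by
      funext τ
      have := hAe' (0, y, τ)
      simp only [h, X', Z, Q', Y', dropLast_apply] at this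
      rw [id, ← this]
      ring
    rw [h4] at h2
    have h5 := h3.unique h2
    rw [show ((0, 0, Y (0, y)) : ℝ × ℝ × ℝ) = Y (0, y) • (0, 0, 1) by simp, map_smul] at h5
    simpa using h5
  let B : ℝ × ℝ × ℝ → ℝ := fun z =>
    A z - z.1 * fderiv ℝ Q' z (0, 1, 0) - z.1 * fderiv ℝ Y' z (1, z.2.2, 0)
  have hB : ContDiff ℝ ∞ B := by
    have hW : ContDiff ℝ ∞ fun z : ℝ × ℝ × ℝ => ((1, z.2.2, 0) : ℝ × ℝ × ℝ) := by fun_prop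
    exact (hA.sub (contDiff_fst.mul (contDiff_fderiv_apply hQ' contDiff_const))).sub
      (contDiff_fst.mul (contDiff_fderiv_apply hY' hW))
  have hYne : ∀ᶠ z in 𝓝 0, Y' z ≠ 0 :=
    hY'.continuous.continuousAt.eventually_ne (by rw [hY'0]; exact one_ne_zero)
  let ρ : ℝ × ℝ × ℝ → ℝ := fun z => 1 + B z / Y' z
  have hρ : ∀ᶠ z in 𝓝 0, ContDiffAt ℝ ∞ ρ z := by
    filter_upwards [hYne] with z hz
    exact contDiffAt_const.add (hB.contDiffAt.div hY'.contDiffAt hz)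
  have htend : Tendsto (fun z : ℝ × ℝ × ℝ => (z.1, X' z, Q' z)) (𝓝 0) (𝓝 0) :=
    (continuous_fst.prodMk (hX'.continuous.prodMk hQ'.continuous)).tendsto' _ _
      (by simp [X', Q', ← Prod.zero_eq_mk, hX00, hQ0])
  have hdrop : Tendsto dropLast (𝓝 0) (𝓝 0) := dropLast.continuous.tendsto' _ _ (map_zero _)
  have hρ0 : ∀ᶠ z : ℝ × ℝ × ℝ in 𝓝 0, z.1 = 0 → z.2.2 = 0 → ρ z = 0 := by
    filter_upwards [hYne, htend.eventually hmP, hdrop.eventually hXQ] with z h1 h2 h3 h4 h5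
    obtain ⟨v, y, p⟩ := z
    simp only at h4 h5
    subst h4 h5
    have h6 := h3.2
    simp only [dropLast_apply, ← Prod.zero_eq_mk, map_zero] at h6
    have h7 := h2 rfl (by simp only [X', Q', dropLast_apply]; linarith)
    simp only [X', Q', dropLast_apply] at h7
    simp only [Y', dropLast_apply] at h1
    simp only [ρ, B, hA0, Y', dropLast_apply, h7]
    field_simp
    ring
  have hρb : ∀ᶠ z in 𝓝 0, |ρ z| ≤ 1 / 2 := by
    have hc := hρ.self_of_nhds.continuousAt.abs.tendsto
    rw [hρ0.self_of_nhds rfl rfl, abs_zero] at hc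
    filter_upwards [hc.eventually (gt_mem_nhds (by norm_num : (0 : ℝ) < 1 / 2))] with z hz using hz.le
  obtain ⟨ψ, -, hψc, hψs, hψ1, hψb, hψρ⟩ := exists_contDiff_cutoff_mul hρ (inter_mem hρ0 hρb)
  refine ⟨fun z => ψ z * ρ z, fun z => (z.1, X' z, Z z), hψρ, hψc.mul_right, fun z => ?_,
    fun x => ?_, ?_⟩
  · beta_reduce
    by_cases hz : z ∈ tsupport ψ
    · rw [abs_mul, abs_of_nonneg (hψb z).1]
      have h1 : |ρ z| ≤ 1 / 2 := (hψs hz).2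
      nlinarith [hψb z, abs_nonneg (ρ z)]
    · rw [image_eq_zero_of_notMem_tsupport hz]
      norm_num
  · beta_reduce
    by_cases hz : (0, x, 0) ∈ tsupport ψ
    · have h1 : ρ (0, x, 0) = 0 := (hψs hz).1 rfl rfl
      rw [h1, mul_zero]
    · rw [image_eq_zero_of_notMem_tsupport hz, zero_mul]
  have hD : ∀ z w, fderiv ℝ (fun z => (z.1, X' z, Z z)) z w =
      (w.1, fderiv ℝ X' z w, fderiv ℝ Z z w) := fun z w => by
    rw [fderiv_triple_apply differentiableAt_fst (hX'.differentiable (by simp) z)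
      (hZ.differentiable (by simp) z), (fderiv_coordinates_apply z w).1]
  refine ⟨?_, ?_, fun w hw => ?_, ?_⟩
  · simp [X', Z, Q', ← Prod.zero_eq_mk, hX00, hQ0]
  · exact Eventually.of_forall fun z => (contDiff_fst.prodMk (hX'.prodMk hZ)).contDiffAt
  · rw [hD] at hw
    simp only [Prod.mk_eq_zero, hZw, hX'w, hQ'w, hY'w] at hw
    obtain ⟨h1, h2, h3⟩ := hw
    rw [h1, show ((0, w.2.1) : ℝ × ℝ) = w.2.1 • (0, 1) by simp, map_smul, map_zero] at h2
    have h4 : w.2.1 * Y 0 = 0 := h2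
    rw [hY0, mul_one] at h4
    rw [h1, h4, hY'0] at h3
    simp only [← Prod.zero_eq_mk, map_zero] at h3
    ext
    · exact h1
    · exact h4
    · simpa using h3
  · filter_upwards [hψ1, hYne, hdrop.eventually hXQ] with z h1 h2 h3
    rw [hD, one_smul]
    have hw : ∀ L : ℝ × ℝ →L[ℝ] ℝ, ∀ a b : ℝ, L (a, b) = L (a, 0) + b * L (0, 1) := fun L a b => by
      rw [← smul_eq_mul, ← map_smul, ← map_add]; simp
    have e1 : fderiv ℝ X' z (saddleField (fun z => ψ z * ρ z) z) = z.1 * Z z := by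
      rw [hX'w]
      simp only [saddleField]
      rw [hw, show fderiv ℝ X (dropLast z) (z.1, 0) = _ from h3.1]
      change z.1 * Q' z + z.1 * z.2.2 * Y' z = z.1 * (Q' z + Y' z * z.2.2)
      ring
    have e2 : fderiv ℝ Z z (saddleField (fun z => ψ z * ρ z) z) = h z := by
      have h4 : fderiv ℝ Q (dropLast z) (z.1, 0) = m (z.1, X' z, Q' z) := by
        rw [show fderiv ℝ Q (dropLast z) (z.1, 0) = _ from h3.2]
        simp [X', Q']
      have h5 : fderiv ℝ Y (dropLast z) (z.1, z.1 * z.2.2) =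
          z.1 * fderiv ℝ Y' z (1, z.2.2, 0) := by
        rw [hY'w, ← smul_eq_mul z.1 (fderiv ℝ Y _ _), ← map_smul]
        simp
      have h6 : fderiv ℝ Q (dropLast z) (0, 1) = fderiv ℝ Q' z (0, 1, 0) := by rw [hQ'w]
      have h7 : Y' z * (1 - ρ z) = -B z := by
        simp only [ρ]
        field_simp
        ring
      rw [hZw, hQ'w, hY'w]
      simp only [saddleField, h1, one_mul]
      rw [hw (fderiv ℝ Q _), h4, h5, h6]
      have h8 := hAe' z
      have h9 : B z = A z - z.1 * fderiv ℝ Q' z (0, 1, 0) - z.1 * fderiv ℝ Y' z (1, z.2.2, 0) :=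
        rfl
      linear_combination (-z.2.2) * h7 - h8 + z.2.2 * h9
    rw [e1, e2]
    rfl

theorem exists_germConj_saddle {m : ℝ × ℝ × ℝ → ℝ} (hm : ∀ᶠ z in 𝓝 0, ContDiffAt ℝ ∞ m z)
    (hm0 : m 0 = 0)
    (hmP : ∀ᶠ z : ℝ × ℝ × ℝ in 𝓝 0, z.1 = 0 → m z = 0 → fderiv ℝ m z (0, 0, 1) = -1) :
    ∃ r Ξ, ContDiff ℝ ∞ r ∧ HasCompactSupport r ∧ (∀ z, |r z| ≤ 1 / 2) ∧
      (∀ x, r (0, x, 0) = 0) ∧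
      IsGermConj Ξ (fun _ => 1) (saddleField r) (fun z => (z.1, z.1 * z.2.2, m z)) 0 0 := by
  obtain ⟨ψ, -, -, -, hψ1, -, hψm⟩ := exists_contDiff_cutoff_mul hm univ_mem
  obtain ⟨r, Ξ, h1, h2, h3, h4, h5⟩ := exists_germConj_saddle_of_contDiff hψm (by simp [hm0]) (by
    filter_upwards [hψ1.eventually_nhds, hmP] with z hz hz' h1 h2
    have e : (fun z => ψ z * m z) =ᶠ[𝓝 z] m := by
      filter_upwards [hz] with y hy using by rw [hy, one_mul]
    rw [e.fderiv_eq]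
    rw [hz.self_of_nhds, one_mul] at h2
    exact hz' h1 h2)
  refine ⟨r, Ξ, h1, h2, h3, h4, h5.map_eq, h5.smooth, h5.injective, ?_⟩
  have ht : Tendsto Ξ (𝓝 0) (𝓝 0) := by
    have := h5.smooth.self_of_nhds.continuousAt.tendsto
    rwa [h5.map_eq] at this
  filter_upwards [h5.conj, ht.eventually hψ1] with z h6 h7
  rw [h6, h7, one_mul]

/-- A field of the form `(v, v p, m)` whose eigenvalue `-1` persists along its curve of singular
points is conjugate to the model field. -/
theorem exists_germConj_modelField {m : ℝ × ℝ × ℝ → ℝ} (hm : ∀ᶠ z in 𝓝 0, ContDiffAt ℝ ∞ m z)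
    (hm0 : m 0 = 0)
    (hmP : ∀ᶠ z : ℝ × ℝ × ℝ in 𝓝 0, z.1 = 0 → m z = 0 → fderiv ℝ m z (0, 0, 1) = -1) :
    ∃ Φ, IsGermConj Φ (fun _ => 1) (fun z => (z.1, z.1 * z.2.2, m z)) modelField 0 0 := by
  obtain ⟨r, Ξ, h1, h2, h3, h4, h5⟩ := exists_germConj_saddle hm hm0 hmP
  obtain ⟨Ψ, hΨ⟩ := h5.exists_symm
  obtain ⟨Φ, hΦ⟩ := exists_germConj_model h1 h2 h3 h4
  exact ⟨_, hΦ.comp hΨ⟩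

end Straightening

section NormalForm

/-- Orbital normal form of a field `(Δ, p Δ, M / 2)` whose divergence condition
`∂M/∂p = -2 (Δ_t + p Δ_x)` holds along its singular set. -/
theorem exists_germConj_of_divergence {Δ : ℝ × ℝ → ℝ} {M : ℝ × ℝ × ℝ → ℝ} {a : ℝ × ℝ × ℝ}
    {k : ℝ × ℝ × ℝ → ℝ} (hk : k = fun z => fderiv ℝ Δ (dropLast z) (1, z.2.2))
    (hΔ : ∀ᶠ u in 𝓝 (dropLast a), ContDiffAt ℝ ∞ Δ u) (hM : ∀ᶠ z in 𝓝 a, ContDiffAt ℝ ∞ M z)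
    (hΔ0 : Δ (dropLast a) = 0) (hM0 : M a = 0) (hk0 : k a ≠ 0)
    (hdiv : ∀ᶠ z in 𝓝 a, Δ (dropLast z) = 0 → M z = 0 → fderiv ℝ M z (0, 0, 1) = -2 * k z) :
    (∀ᶠ z in 𝓝 a, ContDiffAt ℝ ∞ k z) ∧
    ∃ Φ, IsGermConj Φ k (fun z => (Δ (dropLast z), z.2.2 * Δ (dropLast z), M z / 2))
      modelField a 0 := by
  have hdrop : Tendsto dropLast (𝓝 a) (𝓝 (dropLast a)) := dropLast.continuous.continuousAt
  have hΔs : ∀ᶠ z in 𝓝 a, ContDiffAt ℝ ∞ (fun z => Δ (dropLast z)) z := by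
    filter_upwards [hdrop.eventually hΔ] with z hz
    exact hz.comp z dropLast.contDiff.contDiffAt
  have hks : ∀ᶠ z in 𝓝 a, ContDiffAt ℝ ∞ k z := by
    filter_upwards [hdrop.eventually hΔ] with z hz
    rw [hk]
    have h1 : ContDiffAt ℝ ∞ (fun z => fderiv ℝ Δ (dropLast z)) z :=
      (hz.fderiv_right (m := ∞) (by simp)).comp z dropLast.contDiff.contDiffAt
    exact h1.clm_apply (by fun_prop)
  refine ⟨hks, ?_⟩
  have hkne : ∀ᶠ z in 𝓝 a, k z ≠ 0 := hks.self_of_nhds.continuousAt.eventually_ne hk0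
  let V : ℝ × ℝ × ℝ → ℝ × ℝ × ℝ :=
    fun z => (Δ (dropLast z), z.2.2 * Δ (dropLast z), M z / 2)
  have hV : ∀ᶠ z in 𝓝 a, ContDiffAt ℝ ∞ V z := by
    filter_upwards [hΔs, hM] with z h1 h2
    exact h1.prodMk ((contDiff_snd.snd.contDiffAt.mul h1).prodMk (h2.div_const 2))
  have hVa : V a = 0 := by simp [V, hΔ0, hM0, -dropLast_apply]
  let f : ℝ × ℝ × ℝ → ℝ := fun z => (z.2.2 - a.2.2) * (k z)⁻¹
  let e : ℝ × ℝ × ℝ → ℝ := fun z => z.2.1 - a.2.1 - a.2.2 * (z.1 - a.1)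
  have hf : ∀ᶠ z in 𝓝 a, ContDiffAt ℝ ∞ f z := by
    filter_upwards [hks, hkne] with z h1 h2
    exact (by fun_prop : ContDiffAt ℝ ∞ (fun z : ℝ × ℝ × ℝ => z.2.2 - a.2.2) z).mul (h1.inv h2)
  have he : ContDiff ℝ ∞ e := by fun_prop
  have hew : ∀ z w, fderiv ℝ e z w = w.2.1 - a.2.2 * w.1 := fun z w => by
    have h1 : HasFDerivAt (fun z : ℝ × ℝ × ℝ => z.1) (ContinuousLinearMap.fst ℝ ℝ (ℝ × ℝ)) z :=
      hasFDerivAt_fst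
    have h2 : HasFDerivAt (fun z : ℝ × ℝ × ℝ => z.2.1) ((ContinuousLinearMap.fst ℝ ℝ ℝ).comp
        (ContinuousLinearMap.snd ℝ ℝ (ℝ × ℝ))) z := hasFDerivAt_snd.fst
    have h3 := ((h2.sub_const a.2.1).sub ((h1.sub_const a.1).const_mul a.2.2)).fderiv
    refine (congrArg (fun L => L w) h3).trans ?_
    simp
  have hfa : ∀ w, fderiv ℝ f a w = (k a)⁻¹ * w.2.2 := fun w => by
    have h2 : HasFDerivAt (fun z : ℝ × ℝ × ℝ => z.2.2) ((ContinuousLinearMap.snd ℝ ℝ ℝ).comp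
        (ContinuousLinearMap.snd ℝ ℝ (ℝ × ℝ))) a := hasFDerivAt_snd.snd
    have h3 := ((hks.self_of_nhds.inv hk0).differentiableAt (by simp)).hasFDerivAt
    have h4 := ((h2.sub_const a.2.2).mul h3).fderiv
    have h5 := congrArg (fun L => L w) h4
    refine h5.trans ?_
    simp
  let Θ : ℝ × ℝ × ℝ → ℝ × ℝ × ℝ := fun z => (Δ (dropLast z), e z, f z)
  have hΘ : ∀ᶠ z in 𝓝 a, ContDiffAt ℝ ∞ Θ z := by
    filter_upwards [hΔs, hf] with z h1 h2
    exact h1.prodMk (he.contDiffAt.prodMk h2)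
  have hΘw : ∀ᶠ z in 𝓝 a, ∀ w, fderiv ℝ Θ z w =
      (fderiv ℝ Δ (dropLast z) (w.1, w.2.1), w.2.1 - a.2.2 * w.1, fderiv ℝ f z w) := by
    filter_upwards [hΔs, hf, hdrop.eventually hΔ] with z h1 h2 h3 w
    rw [fderiv_triple_apply (h1.differentiableAt (by simp)) (he.differentiable (by simp) z)
      (h2.differentiableAt (by simp)), hew, fderiv_comp_dropLast z (h3.differentiableAt (by simp))]
  have hΘa : Θ a = 0 := by simp [Θ, e, f, ← Prod.zero_eq_mk, hΔ0, -dropLast_apply]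
  have hΘi : ∀ w, fderiv ℝ Θ a w = 0 → w = 0 := by
    intro w hw
    rw [hΘw.self_of_nhds, hfa] at hw
    simp only [Prod.mk_eq_zero] at hw
    obtain ⟨h1, h2, h3⟩ := hw
    have h4 : w.2.1 = a.2.2 * w.1 := by linarith
    rw [h4, show (w.1, a.2.2 * w.1) = w.1 • ((1 : ℝ), a.2.2) by ext <;> simp [mul_comm],
      map_smul] at h1
    have h5 : w.1 = 0 := by
      have h6 : w.1 * k a = 0 := by rw [hk]; exact h1
      exact (mul_eq_zero.1 h6).resolve_right hk0
    have h7 : w.2.2 = 0 := (mul_eq_zero.1 h3).resolve_left (inv_ne_zero hk0)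
    ext
    · exact h5
    · simpa [h5] using h4
    · exact h7
  let G : ℝ × ℝ × ℝ → ℝ := fun z => fderiv ℝ f z (V z) * (k z)⁻¹
  have hG : ∀ᶠ z in 𝓝 a, ContDiffAt ℝ ∞ G z := by
    filter_upwards [hks, hkne, hf, hV] with z h1 h2 h3 h4
    exact ((h3.fderiv_right (m := ∞) (by simp)).clm_apply h4).mul (h1.inv h2)
  have hfp : ∀ᶠ z in 𝓝 a, fderiv ℝ f z (0, 0, 1) ≠ 0 := by
    have h1 : ContDiffAt ℝ ∞ (fun z => fderiv ℝ f z (0, 0, 1)) a :=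
      (hf.self_of_nhds.fderiv_right (m := ∞) (by simp)).clm_apply contDiffAt_const
    refine h1.continuousAt.eventually_ne ?_
    rw [hfa]
    simpa using hk0
  have hGp : ∀ᶠ z in 𝓝 a, Δ (dropLast z) = 0 → G z = 0 →
      fderiv ℝ G z (0, 0, 1) = -fderiv ℝ f z (0, 0, 1) := by
    filter_upwards [hks, hkne, hf, hV, hfp, hdiv, hM, hΔs, hdrop.eventually hΔ] with
      z h1 h2 h3 h4 h5 h6 h7 h8 h9 hz hGz
    have hVz : V z = (M z / 2) • (0, 0, 1) := by simp [V, hz, -dropLast_apply]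
    have hMz : M z = 0 := by
      have h10 : fderiv ℝ f z (V z) * (k z)⁻¹ = 0 := hGz
      rw [hVz, map_smul, smul_eq_mul] at h10
      simpa [h2, h5] using h10
    have hV0 : V z = 0 := by rw [hVz, hMz]; simp
    have hVp : fderiv ℝ V z (0, 0, 1) = (-k z) • (0, 0, 1) := by
      rw [fderiv_triple_apply (h8.differentiableAt (by simp))
        ((contDiff_snd.snd.contDiffAt.mul h8).differentiableAt (by simp))
        ((h7.div_const 2).differentiableAt (by simp)), fderiv_fun_mul (by fun_prop)
        (h8.differentiableAt (by simp)), add_apply, smul_apply, smul_apply,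
        fderiv_comp_dropLast z (h9.differentiableAt (by simp)), hz]
      have h11 : fderiv ℝ (fun z => M z / 2) z (0, 0, 1) = -k z := by
        have h12 := ((h7.differentiableAt (by simp)).hasFDerivAt.mul_const (2⁻¹ : ℝ)).fderiv
        simp only [div_eq_mul_inv]
        rw [h12, smul_apply, h6 hz hMz, smul_eq_mul]
        ring
      rw [h11]
      simp [← Prod.zero_eq_mk]
    have h13 := ((h3.fderiv_right (m := ∞) (by simp)).differentiableAt
      (by simp)).hasFDerivAt.clm_apply (h4.differentiableAt (by simp)).hasFDerivAt
    have h14 := (h13.mul ((h1.inv h2).differentiableAt (by simp)).hasFDerivAt).fderiv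
    refine (congrArg (fun L => L (0, 0, 1)) h14).trans ?_
    simp only [hV0, hVp, map_zero, zero_smul, zero_add, add_zero, smul_apply,
      ContinuousLinearMap.comp_apply, map_smul, smul_eq_mul, Pi.inv_apply]
    field_simp
  obtain ⟨P, hP, haP, hPs, hsm, hsm'⟩ := ContDiffAt.exists_local_inverse hΘ hΘi
    (inter_mem hΘw (inter_mem hG hGp))
  have h0P : (0 : ℝ × ℝ × ℝ) ∈ P.target := by
    rw [← hΘa, ← hP]; exact P.map_source haP
  have hP0 : P.symm 0 = a := by
    rw [← hΘa, ← hP]; exact P.left_inv haP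
  have htend : Tendsto P.symm (𝓝 0) (𝓝 a) := by
    have := (P.continuousAt_symm h0P).tendsto
    rwa [hP0] at this
  have hm : ∀ y ∈ P.target, ContDiffAt ℝ ∞ (G ∘ P.symm) y := fun y hy =>
    have hGy : ContDiffAt ℝ ∞ G (P.symm y) := (hPs (P.map_target hy)).2.1
    hGy.comp y (hsm' y hy)
  have hGm : ∀ z ∈ P.source, (G ∘ P.symm) (Θ z) = G z := fun z hz => by
    rw [← hP, Function.comp_apply, P.left_inv hz]
  obtain ⟨Φ, hΦ⟩ := exists_germConj_modelField (m := G ∘ P.symm)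
    (by filter_upwards [P.open_target.mem_nhds h0P] with y hy using hm y hy)
    (by simp [hP0, G, hVa]) (by
      filter_upwards [P.open_target.mem_nhds h0P, htend.eventually hfp] with y hy hfy hy1 hmy
      obtain ⟨z, hz, rfl⟩ : ∃ z ∈ P.source, Θ z = y :=
        ⟨P.symm y, P.map_target hy, by rw [← hP]; exact P.right_inv hy⟩
      have hzz : P.symm (Θ z) = z := by rw [← hP]; exact P.left_inv hz
      rw [hzz] at hfy
      have h1 : fderiv ℝ ((G ∘ P.symm) ∘ Θ) z =
          (fderiv ℝ (G ∘ P.symm) (Θ z)).comp (fderiv ℝ Θ z) :=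
        fderiv_comp z ((hm _ hy).differentiableAt (by simp)) ((hsm z hz).differentiableAt (by simp))
      have h2 : (G ∘ P.symm) ∘ Θ =ᶠ[𝓝 z] G := by
        filter_upwards [P.open_source.mem_nhds hz] with x hx using hGm x hx
      rw [h2.fderiv_eq] at h1
      have h3 := congrArg (fun L => L (0, 0, 1)) h1
      simp only [ContinuousLinearMap.comp_apply] at h3
      rw [(hPs hz).2.2 hy1 (by rw [← hGm z hz]; exact hmy), (hPs hz).1] at h3
      simp only [← Prod.zero_eq_mk, map_zero, mul_zero, sub_zero] at h3
      rw [show ((0 : ℝ), (0 : ℝ), fderiv ℝ f z (0, 0, 1)) = fderiv ℝ f z (0, 0, 1) • (0, 0, 1) by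
        simp, map_smul, smul_eq_mul] at h3
      refine mul_left_cancel₀ hfy ?_
      rw [← h3]
      ring)
  refine ⟨Φ ∘ Θ, hΦ.comp ⟨hΘa, hΘ, hΘi, ?_⟩⟩
  filter_upwards [P.open_source.mem_nhds haP, hkne] with z hz hkz
  rw [hGm z hz, (hPs hz).1]
  have h1 : fderiv ℝ Δ (dropLast z) (Δ (dropLast z), z.2.2 * Δ (dropLast z)) =
      k z * Δ (dropLast z) := by
    rw [show (Δ (dropLast z), z.2.2 * Δ (dropLast z)) = Δ (dropLast z) • ((1 : ℝ), z.2.2) by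
      ext <;> simp [mul_comm], map_smul, hk, smul_eq_mul, mul_comm]
  refine Prod.ext h1 (Prod.ext ?_ ?_)
  · simp only [Θ, f, Prod.smul_mk, smul_eq_mul]
    field_simp
  · simp only [G, V, Prod.smul_mk, smul_eq_mul]
    field_simp

end NormalForm

lemma IsGermConj.orbEquiv {E : Type} [NormedAddCommGroup E] [NormedSpace ℝ E]
    [FiniteDimensional ℝ E] {Φ : E → E} {h : E → ℝ} {V W : E → E} {a b : E}
    (hΦ : IsGermConj Φ h V W a b) (hh : ∀ᶠ z in 𝓝 a, ContDiffAt ℝ ∞ h z) (h0 : h a ≠ 0)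
    {Dom : Set E} (hD : Dom ∈ 𝓝 a) : OrbEquiv Dom V W a b := by
  have hne : ∀ᶠ z in 𝓝 a, h z ≠ 0 := hh.self_of_nhds.continuousAt.eventually_ne h0
  obtain ⟨P, rfl, haP, hPs, hs, hs'⟩ := ContDiffAt.exists_local_inverse hΦ.smooth hΦ.injective
    (inter_mem hD (inter_mem hΦ.conj (inter_mem hh hne)))
  refine ⟨P.source, P.target, P, P.symm, h, P.open_source, P.open_target, haP, ?_,
    fun z hz => (hPs hz).1, fun z hz => (hs z hz).contDiffWithinAt,
    fun y hy => (hs' y hy).contDiffWithinAt, hΦ.map_eq, P.mapsTo, P.symm.mapsTo,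
    fun z hz => P.left_inv hz, fun y hy => P.right_inv hy,
    fun z hz => ContDiffAt.contDiffWithinAt (hPs hz).2.2.1, fun z hz => (hPs hz).2.2.2,
    fun z hz => (hPs hz).2.1⟩
  rw [← hΦ.map_eq]
  exact P.map_source haP

lemma fderiv_cubic_apply (μ₃ μ₂ μ₁ μ₀ : ℝ × ℝ → ℝ) {z : ℝ × ℝ × ℝ}
    (h : DifferentiableAt ℝ (fun z : ℝ × ℝ × ℝ => μ₃ (z.1, z.2.1) * z.2.2 ^ 3 +
      μ₂ (z.1, z.2.1) * z.2.2 ^ 2 + μ₁ (z.1, z.2.1) * z.2.2 + μ₀ (z.1, z.2.1)) z) :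
    fderiv ℝ (fun z : ℝ × ℝ × ℝ => μ₃ (z.1, z.2.1) * z.2.2 ^ 3 + μ₂ (z.1, z.2.1) * z.2.2 ^ 2 +
      μ₁ (z.1, z.2.1) * z.2.2 + μ₀ (z.1, z.2.1)) z (0, 0, 1) =
    3 * μ₃ (z.1, z.2.1) * z.2.2 ^ 2 + 2 * μ₂ (z.1, z.2.1) * z.2.2 + μ₁ (z.1, z.2.1) := by
  have hl : HasDerivAt (fun p : ℝ => (z.1, z.2.1, p)) ((0 : ℝ), (0 : ℝ), (1 : ℝ)) z.2.2 :=
    (hasDerivAt_const _ _).prodMk ((hasDerivAt_const _ _).prodMk (hasDerivAt_id _))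
  have h1 := HasFDerivAt.comp_hasDerivAt (f := fun p : ℝ => (z.1, z.2.1, p)) z.2.2 h.hasFDerivAt hl
  have h2 : HasDerivAt (fun p : ℝ => μ₃ (z.1, z.2.1) * p ^ 3 + μ₂ (z.1, z.2.1) * p ^ 2 +
      μ₁ (z.1, z.2.1) * p + μ₀ (z.1, z.2.1))
      (3 * μ₃ (z.1, z.2.1) * z.2.2 ^ 2 + 2 * μ₂ (z.1, z.2.1) * z.2.2 + μ₁ (z.1, z.2.1)) z.2.2 := by
    have h3 := ((((hasDerivAt_pow 3 z.2.2).const_mul (μ₃ (z.1, z.2.1))).add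
      ((hasDerivAt_pow 2 z.2.2).const_mul (μ₂ (z.1, z.2.1)))).add
      ((hasDerivAt_id z.2.2).const_mul (μ₁ (z.1, z.2.1)))).add_const (μ₀ (z.1, z.2.1))
    refine h3.congr_deriv ?_
    simp
    ring
  exact h1.unique h2

lemma fderiv_discriminant_apply {a b c : ℝ × ℝ → ℝ} {q : ℝ × ℝ} (ha : DifferentiableAt ℝ a q)
    (hb : DifferentiableAt ℝ b q) (hc : DifferentiableAt ℝ c q) (p : ℝ) :
    fderiv ℝ (fun q => b q ^ 2 - a q * c q) q (1, p) =
      2 * b q * (d1 b q + p * d2 b q) - a q * (d1 c q + p * d2 c q) -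
        c q * (d1 a q + p * d2 a q) := by
  have h1 := (((hb.hasFDerivAt.pow 2).sub (ha.hasFDerivAt.mul hc.hasFDerivAt))).fderiv
  refine (congrArg (fun L => L (1, p)) h1).trans ?_
  have h2 : ∀ g : ℝ × ℝ → ℝ, fderiv ℝ g q (1, p) = d1 g q + p * d2 g q := fun g => by
    rw [show ((1 : ℝ), p) = (1, 0) + p • (0, 1) by simp, map_add, map_smul]
    rfl
  simp [h2]
  ring

/-- At a non-isotropic zero of the cubic over the discriminant curve, the linear part of
`(Δ, p Δ, M / 2)` is traceless. -/
lemma cubic_deriv_eq (a b c at' ax bt bx ct cx p : ℝ) (hΔ : b ^ 2 - a * c = 0)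
    (hM : (a * (at' - 2 * bx) + b * ax) * p ^ 3 +
      (b * (3 * at' - 2 * bx) + c * ax - 2 * a * cx) * p ^ 2 +
      (b * (2 * bt - 3 * cx) + 2 * c * at' - a * ct) * p + (c * (2 * bt - cx) - b * ct) = 0)
    (hF : a * p ^ 2 + 2 * b * p + c ≠ 0) :
    3 * (a * (at' - 2 * bx) + b * ax) * p ^ 2 +
      2 * (b * (3 * at' - 2 * bx) + c * ax - 2 * a * cx) * p +
      (b * (2 * bt - 3 * cx) + 2 * c * at' - a * ct) =
    -2 * (2 * b * (bt + p * bx) - a * (ct + p * cx) - c * (at' + p * ax)) := by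
  refine mul_left_cancel₀ hF ?_
  linear_combination (3 * ((at' * p ^ 2 + 2 * bt * p + ct) + p * (ax * p ^ 2 + 2 * bx * p + cx))) *
    hΔ + 3 / 2 * (2 * a * p + 2 * b) * hM

/-- Pseudo-Riemannian metric: at a parabolic point `q*` and a non-isotropic simple root
`p*` of the cubic `M(q*, ·)`, the germ of `V = (Δ, pΔ, M/2)` at `(q*, p*)` is
`C^∞`-smoothly orbitally equivalent to `ξ̇ = ξ, η̇ = −η, ζ̇ = ξη`. -/
theorem stmt17 (D : Set (ℝ × ℝ)) (hD : IsOpen D)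
    (a b c : ℝ × ℝ → ℝ)
    (ha : ContDiffOn ℝ (⊤ : ℕ∞) a D) (hb : ContDiffOn ℝ (⊤ : ℕ∞) b D)
    (hc : ContDiffOn ℝ (⊤ : ℕ∞) c D)
    (Δ : ℝ × ℝ → ℝ) (hΔ : Δ = fun q => b q ^ 2 - a q * c q)
    (μ₃ μ₂ μ₁ μ₀ : ℝ × ℝ → ℝ)
    (hμ₃ : μ₃ = fun q => a q * (d1 a q - 2 * d2 b q) + b q * d2 a q)
    (hμ₂ : μ₂ = fun q => b q * (3 * d1 a q - 2 * d2 b q) + c q * d2 a q - 2 * a q * d2 c q)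
    (hμ₁ : μ₁ = fun q => b q * (2 * d1 b q - 3 * d2 c q) + 2 * c q * d1 a q - a q * d1 c q)
    (hμ₀ : μ₀ = fun q => c q * (2 * d1 b q - d2 c q) - b q * d1 c q)
    (M : ℝ × ℝ × ℝ → ℝ)
    (hM : M = fun z => μ₃ (z.1, z.2.1) * z.2.2 ^ 3 + μ₂ (z.1, z.2.1) * z.2.2 ^ 2 +
      μ₁ (z.1, z.2.1) * z.2.2 + μ₀ (z.1, z.2.1))
    (V : ℝ × ℝ × ℝ → ℝ × ℝ × ℝ)
    (hV : V = fun z => (Δ (z.1, z.2.1), z.2.2 * Δ (z.1, z.2.1), M z / 2))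
    (q : ℝ × ℝ) (hq : q ∈ D)
    (hq1 : Δ q = 0) (hq2 : fderiv ℝ Δ q ≠ 0) (hq3 : a q ≠ 0)
    (hq4 : a q * d1 Δ q - b q * d2 Δ q ≠ 0)
    (ps : ℝ) (hroot : M (q.1, q.2, ps) = 0)
    (hsimple : fderiv ℝ M (q.1, q.2, ps) ((0 : ℝ), (0 : ℝ), (1 : ℝ)) ≠ 0)
    (hnoniso : a q * ps ^ 2 + 2 * b q * ps + c q ≠ 0) :
    V (q.1, q.2, ps) = 0 ∧
    OrbEquiv {z : ℝ × ℝ × ℝ | (z.1, z.2.1) ∈ D} V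
      (fun y : ℝ × ℝ × ℝ => (y.1, -y.2.1, y.1 * y.2.1)) (q.1, q.2, ps) 0 := by
  refine ⟨by simp [hV, hq1, hroot], ?_⟩
  let z₀ : ℝ × ℝ × ℝ := (q.1, q.2, ps)
  let k : ℝ × ℝ × ℝ → ℝ := fun z => fderiv ℝ Δ (dropLast z) (1, z.2.2)
  have has : ∀ u ∈ D, ContDiffAt ℝ ∞ a u := fun u hu => ha.contDiffAt (hD.mem_nhds hu)
  have hbs : ∀ u ∈ D, ContDiffAt ℝ ∞ b u := fun u hu => hb.contDiffAt (hD.mem_nhds hu)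
  have hcs : ∀ u ∈ D, ContDiffAt ℝ ∞ c u := fun u hu => hc.contDiffAt (hD.mem_nhds hu)
  have hd1 : ∀ {g : ℝ × ℝ → ℝ} {u}, ContDiffAt ℝ ∞ g u → ContDiffAt ℝ ∞ (d1 g) u := fun hg =>
    (hg.fderiv_right (m := ∞) (by simp)).clm_apply contDiffAt_const
  have hd2 : ∀ {g : ℝ × ℝ → ℝ} {u}, ContDiffAt ℝ ∞ g u → ContDiffAt ℝ ∞ (d2 g) u := fun hg =>
    (hg.fderiv_right (m := ∞) (by simp)).clm_apply contDiffAt_const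
  have hΔs : ∀ u ∈ D, ContDiffAt ℝ ∞ Δ u := fun u hu => by
    have h1 := has u hu
    have h2 := hbs u hu
    have h3 := hcs u hu
    rw [hΔ]
    fun_prop
  have hμ : ∀ u ∈ D, ContDiffAt ℝ ∞ μ₃ u ∧ ContDiffAt ℝ ∞ μ₂ u ∧ ContDiffAt ℝ ∞ μ₁ u ∧
      ContDiffAt ℝ ∞ μ₀ u := fun u hu => by
    have h1 := has u hu
    have h2 := hbs u hu
    have h3 := hcs u hu
    have h4 := hd1 h1
    have h5 := hd1 h2
    have h6 := hd1 h3
    have h7 := hd2 h1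
    have h8 := hd2 h2
    have h9 := hd2 h3
    rw [hμ₃, hμ₂, hμ₁, hμ₀]
    refine ⟨?_, ?_, ?_, ?_⟩ <;> fun_prop
  have hDom : {z : ℝ × ℝ × ℝ | (z.1, z.2.1) ∈ D} ∈ 𝓝 z₀ :=
    (hD.preimage dropLast.continuous).mem_nhds hq
  have hMs : ∀ z : ℝ × ℝ × ℝ, (z.1, z.2.1) ∈ D → ContDiffAt ℝ ∞ M z := fun z hz => by
    obtain ⟨h3, h2, h1, h0⟩ := hμ _ hz
    have hcomp : ∀ {g : ℝ × ℝ → ℝ}, ContDiffAt ℝ ∞ g (z.1, z.2.1) →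
        ContDiffAt ℝ ∞ (fun z : ℝ × ℝ × ℝ => g (z.1, z.2.1)) z := fun hg =>
      ContDiffAt.comp (f := dropLast) z hg dropLast.contDiff.contDiffAt
    have h3' := hcomp h3
    have h2' := hcomp h2
    have h1' := hcomp h1
    have h0' := hcomp h0
    rw [hM]
    fun_prop
  have hdiv : ∀ z : ℝ × ℝ × ℝ, (z.1, z.2.1) ∈ D →
      a (z.1, z.2.1) * z.2.2 ^ 2 + 2 * b (z.1, z.2.1) * z.2.2 + c (z.1, z.2.1) ≠ 0 →
      Δ (dropLast z) = 0 → M z = 0 → fderiv ℝ M z (0, 0, 1) = -2 * k z := by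
    intro z hz hF hΔz hMz
    have hdM := (hMs z hz).differentiableAt (by simp)
    rw [hM] at hdM
    have hkz := fderiv_discriminant_apply ((has _ hz).differentiableAt (by simp))
      ((hbs _ hz).differentiableAt (by simp)) ((hcs _ hz).differentiableAt (by simp)) z.2.2
    rw [← hΔ] at hkz
    change fderiv ℝ M z (0, 0, 1) = -2 * fderiv ℝ Δ (z.1, z.2.1) (1, z.2.2)
    rw [hkz, hM, fderiv_cubic_apply _ _ _ _ hdM, hμ₃, hμ₂, hμ₁]
    refine cubic_deriv_eq _ _ _ _ _ _ _ _ _ _ ?_ ?_ hF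
    · rw [hΔ] at hΔz
      exact hΔz
    · rw [hM, hμ₃, hμ₂, hμ₁, hμ₀] at hMz
      exact hMz
  have hF : ∀ᶠ z : ℝ × ℝ × ℝ in 𝓝 z₀,
      a (z.1, z.2.1) * z.2.2 ^ 2 + 2 * b (z.1, z.2.1) * z.2.2 + c (z.1, z.2.1) ≠ 0 := by
    refine ContinuousAt.eventually_ne ?_ hnoniso
    have hcomp : ∀ {g : ℝ × ℝ → ℝ}, ContDiffAt ℝ ∞ g q →
        ContinuousAt (fun z : ℝ × ℝ × ℝ => g (z.1, z.2.1)) z₀ := fun hg =>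
      ContinuousAt.comp (f := dropLast) hg.continuousAt dropLast.continuous.continuousAt
    have h1 := hcomp (has q hq)
    have h2 := hcomp (hbs q hq)
    have h3 := hcomp (hcs q hq)
    fun_prop
  have hk0 : k z₀ ≠ 0 := fun h => hsimple (by
    rw [hdiv z₀ hq hnoniso hq1 hroot, h, mul_zero])
  obtain ⟨hks, Φ, hΦ⟩ := exists_germConj_of_divergence (Δ := Δ) (M := M) (a := z₀) (k := k) rfl
    (by filter_upwards [hD.mem_nhds hq] with u hu using hΔs u hu)
    (by filter_upwards [hDom] with z hz using hMs z hz) hq1 hroot hk0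
    (by filter_upwards [hDom, hF] with z hz hFz using hdiv z hz hFz)
  rw [hV]
  exact hΦ.orbEquiv hks hk0 hDom
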